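/- For all integers $d \ge 1$ and $n \ge d+2$, $|\bar{\mathcal{S}}_2(n,d)| = \frac{1}{2}d^2 + \frac{3}{2}d$ (equivalently $2\,|\bar{\mathcal{S}}_2(n,d)| = d^2 + 3d$); and for all integers $d \ge 1$ and $n \ge d+3$, $|\bar{\mathcal{S}}_3(n,d)| = \frac{1}{6}d^3 + d^2 + \frac{17}{6}d - 2$ (equivalently $6\,|\bar{\mathcal{S}}_3(n,d)| = d^3 + 6d^2 + 17d - 12$). -/

import Mathlib

/-! Common definitions: signotopes and co-signotopes on `[n] = {1, …, n}` (encoded as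
`Finset.Icc 1 n` in `ℕ`), sign functions are `Finset ℕ → Bool` (`true` = `+`, `false` = `-`)
that vanish (are `-`) away from the relevant subsets. -/

open Classical in
/-- The sign function with `+`-set `S` (and `-` elsewhere). -/
noncomputable def ofPlusSet (S : Set (Finset ℕ)) : Finset ℕ → Bool :=
  fun A => if A ∈ S then true else false

/-- Number of sign changes in a list of signs. -/
def signChanges (l : List Bool) : ℕ :=
  ((l.zip l.tail).filter fun p => p.1 ≠ p.2).length

/-- Number of `+`-subsets of a sign function. -/
noncomputable def plusCount (τ : Finset ℕ → Bool) : ℕ :=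
  {A : Finset ℕ | τ A = true}.ncard

/-- The series of signs `τ (C ∪ {x})` for `x ∈ [n] \ C` in increasing order.
For a `d`-subset `B` with `i`-th smallest element `b`, `series n τ (B.erase b)` is
the `(τ,B,i)`-series. -/
def series (n : ℕ) (τ : Finset ℕ → Bool) (C : Finset ℕ) : List Bool :=
  ((Finset.Icc 1 n \ C).sort (· ≤ ·)).map fun x => τ (insert x C)

/-- An `r`-signotope on `[n]`, encoded as a sign function on all of `Finset ℕ`
which is `-` away from the `r`-subsets of `[n]`. -/
def IsSignotope (n r : ℕ) (σ : Finset ℕ → Bool) : Prop :=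
  (∀ A, σ A = true → A ⊆ Finset.Icc 1 n ∧ A.card = r) ∧
  ∀ X : Finset ℕ, X ⊆ Finset.Icc 1 n → X.card = r + 1 →
    signChanges ((X.sort (· ≤ ·)).map fun x => σ (X.erase x)) ≤ 1

/-- A `d`-co-signotope on `[n]`: every `(τ,B,i)`-series has at most one sign change. -/
def IsCoSignotope (n d : ℕ) (τ : Finset ℕ → Bool) : Prop :=
  (∀ A, τ A = true → A ⊆ Finset.Icc 1 n ∧ A.card = d) ∧
  ∀ B : Finset ℕ, B ⊆ Finset.Icc 1 n → B.card = d → ∀ b ∈ B,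
    signChanges (series n τ (B.erase b)) ≤ 1

/-- `𝒮_p(n,r)`: `r`-signotopes on `[n]` with exactly `p` `+`-signs. -/
noncomputable def sigSet (n r p : ℕ) : Set (Finset ℕ → Bool) :=
  {σ | IsSignotope n r σ ∧ plusCount σ = p}

/-- `𝒮_{≤p}(n,r)`. -/
noncomputable def sigSetLe (n r p : ℕ) : Set (Finset ℕ → Bool) :=
  {σ | IsSignotope n r σ ∧ plusCount σ ≤ p}

/-- `𝒮̄_p(n,d)`: `d`-co-signotopes on `[n]` with exactly `p` `+`-subsets. -/
noncomputable def coSigSet (n d p : ℕ) : Set (Finset ℕ → Bool) :=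
  {τ | IsCoSignotope n d τ ∧ plusCount τ = p}

/-- `𝒮̄_{≤p}(n,d)`. -/
noncomputable def coSigSetLe (n d p : ℕ) : Set (Finset ℕ → Bool) :=
  {τ | IsCoSignotope n d τ ∧ plusCount τ ≤ p}

/-- `σ` and `τ` differ by a single step: `σ⁻¹(+) ⊊ τ⁻¹(+)` and `|τ⁻¹(+)| = |σ⁻¹(+)| + 1`. -/
noncomputable def SingleStep (σ τ : Finset ℕ → Bool) : Prop :=
  {A | σ A = true} ⊂ {A | τ A = true} ∧ plusCount τ = plusCount σ + 1

/-- The higher Bruhat order on `r`-signotopes on `[n]`: reflexive-transitive closure of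
the single step relation. -/
noncomputable def BruhatLe (n r : ℕ) (σ τ : Finset ℕ → Bool) : Prop :=
  Relation.ReflTransGen (fun a b => IsSignotope n r a ∧ IsSignotope n r b ∧ SingleStep a b) σ τ

/-- The complementary higher Bruhat order on `d`-co-signotopes on `[n]`. -/
noncomputable def CoBruhatLe (n d : ℕ) (σ τ : Finset ℕ → Bool) : Prop :=
  Relation.ReflTransGen (fun a b => IsCoSignotope n d a ∧ IsCoSignotope n d b ∧ SingleStep a b) σ τ

/-- Adjacency in the graph `G_{n,d}`: `B' = (B \ {x}) ∪ {y}` with no element of `B \ {x}`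
strictly between `x` and `y`. -/
def GAdj (n d : ℕ) (B B' : Finset ℕ) : Prop :=
  B ⊆ Finset.Icc 1 n ∧ B.card = d ∧ B' ⊆ Finset.Icc 1 n ∧ B'.card = d ∧
  ∃ x ∈ B, ∃ y ∈ Finset.Icc 1 n, y ∉ B ∧ B' = insert y (B.erase x) ∧
    ∀ z ∈ B.erase x, ¬(min x y < z ∧ z < max x y)

/-- The source subset `S_{n,d,i} = {1,…,i} ∪ {n-d+i+1,…,n}`. -/
def sourceSubset (n d i : ℕ) : Finset ℕ :=
  Finset.Icc 1 i ∪ Finset.Icc (n - d + i + 1) n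

/-- Connectivity inside the `+`-subsets of `τ` (the induced subgraph `G_{n,d}[τ]`). -/
def plusConn (n d : ℕ) (τ : Finset ℕ → Bool) : Finset ℕ → Finset ℕ → Prop :=
  Relation.ReflTransGen fun A A' => τ A = true ∧ τ A' = true ∧ GAdj n d A A'

/-- The vertex set `𝒞^τ_i` of the `+`-component of `τ` containing `S_{n,d,i}`
(empty if `S_{n,d,i}` is not a `+`-subset). -/
def comp (n d : ℕ) (τ : Finset ℕ → Bool) (i : ℕ) : Set (Finset ℕ) :=
  {B | τ (sourceSubset n d i) = true ∧ τ B = true ∧ plusConn n d τ (sourceSubset n d i) B}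

/-- The `j`-th smallest element (1-based) of a finite set of naturals. -/
def nthElt (B : Finset ℕ) (j : ℕ) : ℕ := (B.sort (· ≤ ·)).getD (j - 1) 0

/-- `b_j` with the conventions `b_0 = 0` and `b_{d+1} = n+1` (as an integer). -/
def extNth (n d : ℕ) (B : Finset ℕ) (j : ℕ) : ℤ :=
  if j = 0 then 0 else if j ≤ d then (nthElt B j : ℤ) else (n : ℤ) + 1

/-- A series is left-aligned if it starts with `+` and ends with `-`. -/
def LeftAligned (l : List Bool) : Prop :=
  l.head? = some true ∧ l.getLast? = some false

/-- A series is right-aligned if it starts with `-` and ends with `+`. -/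
def RightAligned (l : List Bool) : Prop :=
  l.head? = some false ∧ l.getLast? = some true

/-- `𝒮̄_{p,i}(n,d)`: co-signotopes in `𝒮̄_p(n,d)` whose only nonempty `+`-component
is `𝒞^τ_i` (i.e. every `+`-subset lies in `𝒞^τ_i`). -/
noncomputable def coSigOnly (n d p i : ℕ) : Set (Finset ℕ → Bool) :=
  {τ | IsCoSignotope n d τ ∧ plusCount τ = p ∧ ∀ B, τ B = true → B ∈ comp n d τ i}

/-- `Z(d,i)`: points `(a_1,…,a_d) ∈ ℤ_{>0}^d` (0-indexed in Lean) with `a_j ≥ a_{j-1}`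
for `j ∈ [2,i]` and `a_j ≥ a_{j+1}` for `j ∈ [i+1,d-1]` (1-based indices). -/
def ZSet (d i : ℕ) : Set (Fin d → ℤ) :=
  {a | (∀ j, 0 < a j) ∧
    (∀ j k : Fin d, (j : ℕ) + 1 = (k : ℕ) → (k : ℕ) + 1 ≤ i → a j ≤ a k) ∧
    (∀ j k : Fin d, (j : ℕ) + 1 = (k : ℕ) → i ≤ (j : ℕ) → a k ≤ a j)}

/-- A `(d,i)`-Ferrers diagram with respect to `p`. -/
def IsFerrers (d i p : ℕ) (F : Set (Fin d → ℤ)) : Prop :=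
  F ⊆ ZSet d i ∧ F.ncard = p ∧
  ∀ a ∈ F, ∀ a' ∈ ZSet d i, (∀ j, a' j ≤ a j) → a' ∈ F

/-- The number of `(d,i)`-Ferrers diagrams with respect to `p`. -/
noncomputable def ferrersCount (d i p : ℕ) : ℕ :=
  {F : Set (Fin d → ℤ) | IsFerrers d i p F}.ncard

/-- `f_{n,d,i,j}` (here `j` is the 1-based coordinate index). -/
def fFun (n d i j : ℕ) (x : ℕ) : ℤ :=
  if j ≤ i then (x : ℤ) - j + 1 else ((n : ℤ) - x) - ((d : ℤ) - j) + 1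

/-- `g_{n,d,i}` maps a `d`-subset `B = (b_1 < … < b_d)` to
`(f_{n,d,i,1}(b_1), …, f_{n,d,i,d}(b_d))`. -/
def gMap (n d i : ℕ) (B : Finset ℕ) : Fin d → ℤ :=
  fun k => fFun n d i ((k : ℕ) + 1) (nthElt B ((k : ℕ) + 1))

/-- A sparse composition of `p` of length `d+1`. -/
def IsSparseComposition (d p : ℕ) (c : Fin (d + 1) → ℕ) : Prop :=
  (∑ i, c i) = p ∧
  ∀ i : Fin (d + 1), 1 ≤ (i : ℕ) →
    c i = 0 ∨ c ⟨(i : ℕ) - 1, lt_of_le_of_lt (Nat.sub_le _ _) i.isLt⟩ = 0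

/-- The component `τ_i` of the `+`-component decomposition `Δ(τ)`:
the sign function whose `+`-set is `𝒞^τ_i`. -/
noncomputable def compFun (n d : ℕ) (τ : Finset ℕ → Bool) (i : ℕ) : Finset ℕ → Bool :=
  ofPlusSet (comp n d τ i)

/-- Keep the `i` smallest elements of `B` and shift the others by `ñ - n`
(this is `g⁻¹_{ñ,d,i} ∘ g_{n,d,i}` on `d`-subsets). -/
def gammaSet (n tn i : ℕ) (B : Finset ℕ) : Finset ℕ :=
  ((B.sort (· ≤ ·)).mapIdx fun k x => if k < i then x else x + tn - n).toFinset

/-- The map `h_{n,ñ,d,p,i}` on sign functions. -/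
noncomputable def hFun (n tn i : ℕ) (τ : Finset ℕ → Bool) : Finset ℕ → Bool :=
  ofPlusSet {A | ∃ B, τ B = true ∧ A = gammaSet n tn i B}

open Classical in
/-- `γ_{τ,ñ}(B)`: replace `b_j` by `b_j + ñ - n` whenever the `(τ,B,j)`-series is
right-aligned. -/
noncomputable def gammaFun (n tn : ℕ) (τ : Finset ℕ → Bool) (B : Finset ℕ) : Finset ℕ :=
  B.image fun x => if RightAligned (series n τ (B.erase x)) then x + tn - n else x

/-- The simple bijection `φ_{n,ñ,d,p}` on sign functions. -/
noncomputable def phiFun (n tn : ℕ) (τ : Finset ℕ → Bool) : Finset ℕ → Bool :=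
  ofPlusSet {A | ∃ B, τ B = true ∧ A = gammaFun n tn τ B}

/-! ### Sign changes -/

lemma signChanges_cons2 (a b : Bool) (l : List Bool) :
    signChanges (a :: b :: l) = (if a = b then 0 else 1) + signChanges (b :: l) := by
  unfold signChanges
  cases a <;> cases b <;> simp <;> omega

lemma signChanges_zero (l : List Bool) : ∀ a, signChanges (a :: l) = 0 ↔ ∀ x ∈ l, x = a := by
  induction l with
  | nil => intro a; simp [signChanges]
  | cons b l ih =>
    intro a
    rw [signChanges_cons2]
    by_cases h : a = b
    · subst h; simp [ih]
    · simp [h]; intro h'; exact absurd h'.symm h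

lemma signChanges_le_one (l : List Bool) : signChanges l ≤ 1 ↔
    (l.Pairwise (fun a b => b = true → a = true) ∨ l.Pairwise (fun a b => a = true → b = true)) := by
  induction l with
  | nil => simp [signChanges]
  | cons a l ih =>
    cases l with
    | nil => simp [signChanges]
    | cons b l =>
      rw [signChanges_cons2]
      by_cases h : a = b
      · subst h
        simp only [if_true, Nat.zero_add, ih, List.pairwise_cons]
        cases a <;> simp
      · have h1 : (if a = b then 0 else 1) + signChanges (b :: l) ≤ 1 ↔
            signChanges (b :: l) = 0 := by simp [h]
        rw [h1, signChanges_zero]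
        simp only [List.pairwise_cons]
        cases a <;> cases b <;> simp at h ⊢
        · intro h
          exact List.Pairwise.imp_of_mem (fun _ hy _ _ => by
              by_contra hb
              rw [Bool.not_eq_true] at hb
              exact h (hb ▸ hy))
            (List.pairwise_of_forall (R := fun _ _ => True) (by simp))
        · intro h
          exact List.Pairwise.imp_of_mem (fun _ hy _ hh => by
              subst hh; exact absurd hy h)
            (List.pairwise_of_forall (R := fun _ _ => True) (by simp))

lemma pairwise_sort_map (s : Finset ℕ) (f : ℕ → Bool) (R : Bool → Bool → Prop) :
    ((s.sort (· ≤ ·)).map f).Pairwise R ↔ ∀ x ∈ s, ∀ y ∈ s, x < y → R (f x) (f y) := by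
  rw [List.pairwise_map]
  constructor
  · intro h x hx y hy hxy
    have hs := (s.sortedLT_sort)
    have hx' : x ∈ s.sort (· ≤ ·) := by simpa using hx
    have hy' : y ∈ s.sort (· ≤ ·) := by simpa using hy
    obtain ⟨i, hi, rfl⟩ := List.mem_iff_getElem.1 hx'
    obtain ⟨j, hj, rfl⟩ := List.mem_iff_getElem.1 hy'
    rw [List.pairwise_iff_getElem] at h
    refine h i j hi hj ?_
    by_contra hij
    have := hs.pairwise
    rw [List.pairwise_iff_getElem] at this
    rcases Nat.lt_or_ge j i with h1 | h1
    · have := this j i hj hi h1; omega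
    · have : i = j := by omega
      subst this; omega
  · intro h
    refine List.Pairwise.imp_of_mem ?_ (s.sortedLT_sort).pairwise
    intro a b ha hb hab
    exact h a (by simpa using ha) b (by simpa using hb) hab

/-! ### Reformulation through finite families -/

/-- exchange `b` for `z` -/
def swp (A : Finset ℕ) (b z : ℕ) : Finset ℕ := insert z (A.erase b)

lemma mem_swp (A : Finset ℕ) (b z x : ℕ) : x ∈ swp A b z ↔ x = z ∨ (x ≠ b ∧ x ∈ A) := by
  simp [swp]

lemma card_swp {A : Finset ℕ} {b z : ℕ} (hb : b ∈ A) (hz : z ∉ A) : (swp A b z).card = A.card := by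
  unfold swp
  rw [Finset.card_insert_of_notMem (by simp [hz]), Finset.card_erase_of_mem hb]
  have : 0 < A.card := Finset.card_pos.2 ⟨b, hb⟩
  omega

lemma swp_inj {A : Finset ℕ} {b z b' z' : ℕ} (hb : b ∈ A) (hz : z ∉ A) (hb' : b' ∈ A)
    (hz' : z' ∉ A) (h : swp A b z = swp A b' z') : b = b' ∧ z = z' := by
  have h1 := fun x => Finset.ext_iff.1 h x
  simp only [mem_swp] at h1
  have e1 := h1 b
  have e2 := h1 z
  have e3 := h1 b'
  have e4 := h1 z'
  grind

lemma swp_ne {A : Finset ℕ} {b z : ℕ} (hz : z ∉ A) : swp A b z ≠ A := by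
  intro h
  have := (Finset.ext_iff.1 h z)
  simp [mem_swp, hz] at this

/-- The family analogue of co-signotopes. -/
def Good (n : ℕ) (P : Finset (Finset ℕ)) : Prop :=
  ∀ A ∈ P, ∀ b ∈ A,
    (∀ x ∈ Finset.Icc 1 n \ A.erase b, ∀ y ∈ Finset.Icc 1 n \ A.erase b, x < y →
      swp A b y ∈ P → swp A b x ∈ P) ∨
    (∀ x ∈ Finset.Icc 1 n \ A.erase b, ∀ y ∈ Finset.Icc 1 n \ A.erase b, x < y →
      swp A b x ∈ P → swp A b y ∈ P)

def SubFam (n d : ℕ) (P : Finset (Finset ℕ)) : Prop :=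
  ∀ A ∈ P, A ⊆ Finset.Icc 1 n ∧ A.card = d

/-- The sign function of a finite family. -/
def toSign (P : Finset (Finset ℕ)) : Finset ℕ → Bool := fun A => decide (A ∈ P)

lemma toSign_inj : Function.Injective toSign := by
  intro P Q h
  ext A
  have := congrFun h A
  simpa [toSign] using this

lemma isCo_iff (n d : ℕ) (P : Finset (Finset ℕ)) :
    IsCoSignotope n d (toSign P) ↔ SubFam n d P ∧ Good n P := by
  unfold IsCoSignotope SubFam Good
  simp only [series, signChanges_le_one, pairwise_sort_map, toSign, decide_eq_true_eq]
  constructor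
  · rintro ⟨h1, h2⟩
    refine ⟨h1, fun A hA b hb => ?_⟩
    exact h2 A (h1 A hA).1 (h1 A hA).2 b hb
  · rintro ⟨h1, h2⟩
    refine ⟨h1, fun B hB hd b hb => ?_⟩
    by_cases h : ∃ x ∈ Finset.Icc 1 n \ B.erase b, insert x (B.erase b) ∈ P
    · obtain ⟨x, hx, hxP⟩ := h
      have := h2 _ hxP x (by simp)
      rw [Finset.mem_sdiff] at hx
      simpa only [swp, Finset.erase_insert hx.2] using this
    · left
      intro x hx y hy hxy hyP
      exact absurd ⟨y, hy, hyP⟩ h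

lemma coSig_eq (n d p : ℕ) (hp : 0 < p) :
    coSigSet n d p = toSign '' {P | (SubFam n d P ∧ Good n P) ∧ P.card = p} := by
  ext τ
  constructor
  · rintro ⟨h1, h2⟩
    have hf : {A : Finset ℕ | τ A = true}.Finite := by
      apply Set.finite_of_ncard_pos
      unfold plusCount at h2; omega
    have e : toSign hf.toFinset = τ := by
      funext A
      simp [toSign]
    refine ⟨hf.toFinset, ⟨?_, ?_⟩, e⟩
    · rw [← isCo_iff, e]; exact h1
    · rw [← h2, plusCount, Set.ncard_eq_toFinset_card _ hf]
  · rintro ⟨P, ⟨h1, h2⟩, rfl⟩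
    refine ⟨(isCo_iff _ _ _).2 h1, ?_⟩
    rw [plusCount, ← h2, ← Set.ncard_coe_finset]
    congr 1
    ext A; simp [toSign]

lemma coSig_ncard (n d p : ℕ) (hp : 0 < p) (F : Finset (Finset (Finset ℕ)))
    (h : ∀ P, P ∈ F ↔ (SubFam n d P ∧ Good n P) ∧ P.card = p) :
    (coSigSet n d p).ncard = F.card := by
  rw [coSig_eq n d p hp, Set.ncard_image_of_injective _ toSign_inj, ← Set.ncard_coe_finset]
  congr 1
  ext P; simp [h]

/-- local consequence -/
lemma Good.loc {n : ℕ} {P : Finset (Finset ℕ)} (h : Good n P) {A : Finset ℕ} (hA : A ∈ P)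
    (hs : A ⊆ Finset.Icc 1 n) {b : ℕ} (hb : b ∈ A) :
    (∀ z, 1 ≤ z → z ∉ A → z < b → swp A b z ∈ P) ∨
    (∀ z, z ≤ n → z ∉ A → b < z → swp A b z ∈ P) := by
  have hb' := Finset.mem_Icc.1 (hs hb)
  have e : swp A b b = A := by unfold swp; exact Finset.insert_erase hb
  rcases h A hA b hb with h | h
  · left
    intro z hz hzA hzb
    refine h z ?_ b ?_ hzb (by rw [e]; exact hA)
    · simp [hzA]; omega
    · simp; omega
  · right
    intro z hz hzA hzb
    refine h b ?_ z ?_ hzb (by rw [e]; exact hA)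
    · simp; omega
    · simp [hzA]; omega

/-- `A` and `A'` are the two ends of the same series. -/
def Bad (n : ℕ) (A A' : Finset ℕ) : Prop :=
  ∃ b b', b < b' ∧ b ∈ A ∧ b ∉ A' ∧ b' ∈ A' ∧ b' ∉ A ∧ (∀ z, z ≠ b → z ≠ b' → (z ∈ A ↔ z ∈ A')) ∧
    (∀ z, 1 ≤ z → z < b → z ∈ A) ∧ (∀ z, b' < z → z ≤ n → z ∈ A)

lemma good_of {n d : ℕ} {P : Finset (Finset ℕ)} (hs : SubFam n d P)
    (hl : ∀ A ∈ P, ∀ b ∈ A, (∀ z, 1 ≤ z → z ∉ A → z < b → swp A b z ∈ P) ∨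
    (∀ z, z ≤ n → z ∉ A → b < z → swp A b z ∈ P))
    (hbad : ∀ A ∈ P, ∀ A' ∈ P, ¬ Bad n A A') : Good n P := by
  intro A hA b hb
  by_contra hcon
  push Not at hcon
  obtain ⟨⟨x, hx, y, hy, hxy, hyP, hxP⟩, ⟨x', hx', y', hy', hxy', hxP', hyP'⟩⟩ := hcon
  -- every plus element of the series is closed to the left or to the right
  have key : ∀ w ∈ Finset.Icc 1 n \ A.erase b, swp A b w ∈ P →
      (∀ z ∈ Finset.Icc 1 n \ A.erase b, z < w → swp A b z ∈ P) ∨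
      (∀ z ∈ Finset.Icc 1 n \ A.erase b, w < z → swp A b z ∈ P) := by
    intro w hw hwP
    have hw2 := (Finset.mem_sdiff.1 hw).2
    have e : ∀ z, swp (swp A b w) w z = swp A b z := by
      intro z; unfold swp; rw [Finset.erase_insert hw2]
    have hm : ∀ z ∈ Finset.Icc 1 n \ A.erase b, z ≠ w → z ∉ swp A b w := by
      intro z hz hzw h
      rw [swp, Finset.mem_insert] at h
      rcases h with h | h
      · exact hzw h
      · exact (Finset.mem_sdiff.1 hz).2 h
    rcases hl _ hwP w (by simp [swp]) with h | h
    · left; intro z hz hzw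
      rw [← e]
      exact h z (by simp at hz; omega) (hm z hz (by omega)) hzw
    · right; intro z hz hzw
      rw [← e]
      exact h z (by simp at hz; omega) (hm z hz (by omega)) hzw
  set N := Finset.Icc 1 n \ A.erase b with hN
  have hne : N.Nonempty := ⟨x, hx⟩
  have hlo := N.min'_mem hne
  have hhi := N.max'_mem hne
  have hlole : ∀ z ∈ N, N.min' hne ≤ z := fun z hz => N.min'_le z hz
  have hhige : ∀ z ∈ N, z ≤ N.max' hne := fun z hz => N.le_max' z hz
  generalize N.min' hne = lo at *
  generalize N.max' hne = hi at *
  -- the first and the last elements of the series are plus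
  have hhiP : swp A b hi ∈ P := by
    rcases key y hy hyP with h | h
    · exact absurd (h x hx hxy) hxP
    · rcases (hhige y hy).lt_or_eq with h' | h'
      · exact h hi hhi h'
      · rw [← h']; exact hyP
  have hloP : swp A b lo ∈ P := by
    rcases key x' hx' hxP' with h | h
    · rcases (hlole x' hx').lt_or_eq with h' | h'
      · exact h lo hlo h'
      · rw [h']; exact hxP'
    · exact absurd (h y' hy' hxy') hyP'
  have hlt : lo < hi := lt_of_le_of_lt (hlole x hx) (lt_of_lt_of_le hxy (hhige y hy))
  refine hbad _ hloP _ hhiP ⟨lo, hi, hlt, ?_⟩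
  simp only [hN, Finset.mem_sdiff, Finset.mem_Icc, Finset.mem_erase] at hlo hhi hlole hhige
  simp only [mem_swp]
  refine ⟨by grind, by grind, by grind, by grind, by grind, ?_, ?_⟩
  · intro z h1 h2
    by_contra hz
    have := hlole z ⟨⟨h1, by omega⟩, by grind⟩
    omega
  · intro z h1 h2
    by_contra hz
    have := hhige z ⟨⟨by omega, h2⟩, by grind⟩
    omega

/-! ### The sets involved -/

def sS (d m i : ℕ) : Finset ℕ := Finset.Icc 1 i ∪ Finset.Icc (m + i + 1) (d + m)
def sU (d m i : ℕ) : Finset ℕ := swp (sS d m i) i (i + 1)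
def sV (d m i : ℕ) : Finset ℕ := swp (sS d m i) (m + i + 1) (m + i)
def sU2 (d m i : ℕ) : Finset ℕ := swp (sS d m i) i (i + 2)
def sV2 (d m i : ℕ) : Finset ℕ := swp (sS d m i) (m + i + 1) (m + i - 1)
def sUU (d m i : ℕ) : Finset ℕ := swp (sS d m i) (i - 1) (i + 1)
def sVV (d m i : ℕ) : Finset ℕ := swp (sS d m i) (m + i + 2) (m + i)

lemma mem_sS (d m i x : ℕ) : x ∈ sS d m i ↔ (1 ≤ x ∧ x ≤ i) ∨ (m + i + 1 ≤ x ∧ x ≤ d + m) := by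
  simp [sS]
lemma mem_sU (d m i x : ℕ) : x ∈ sU d m i ↔ x = i + 1 ∨ (x ≠ i ∧
    ((1 ≤ x ∧ x ≤ i) ∨ (m + i + 1 ≤ x ∧ x ≤ d + m))) := by
  rw [sU, mem_swp, mem_sS]
lemma mem_sV (d m i x : ℕ) : x ∈ sV d m i ↔ x = m + i ∨ (x ≠ m + i + 1 ∧
    ((1 ≤ x ∧ x ≤ i) ∨ (m + i + 1 ≤ x ∧ x ≤ d + m))) := by
  rw [sV, mem_swp, mem_sS]
lemma mem_sU2 (d m i x : ℕ) : x ∈ sU2 d m i ↔ x = i + 2 ∨ (x ≠ i ∧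
    ((1 ≤ x ∧ x ≤ i) ∨ (m + i + 1 ≤ x ∧ x ≤ d + m))) := by
  rw [sU2, mem_swp, mem_sS]
lemma mem_sV2 (d m i x : ℕ) : x ∈ sV2 d m i ↔ x = m + i - 1 ∨ (x ≠ m + i + 1 ∧
    ((1 ≤ x ∧ x ≤ i) ∨ (m + i + 1 ≤ x ∧ x ≤ d + m))) := by
  rw [sV2, mem_swp, mem_sS]
lemma mem_sUU (d m i x : ℕ) : x ∈ sUU d m i ↔ x = i + 1 ∨ (x ≠ i - 1 ∧
    ((1 ≤ x ∧ x ≤ i) ∨ (m + i + 1 ≤ x ∧ x ≤ d + m))) := by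
  rw [sUU, mem_swp, mem_sS]
lemma mem_sVV (d m i x : ℕ) : x ∈ sVV d m i ↔ x = m + i ∨ (x ≠ m + i + 2 ∧
    ((1 ≤ x ∧ x ≤ i) ∨ (m + i + 1 ≤ x ∧ x ≤ d + m))) := by
  rw [sVV, mem_swp, mem_sS]

lemma sub_sS {d m i : ℕ} (hi : i ≤ d) :
    sS d m i ⊆ Finset.Icc 1 (d + m) ∧ (sS d m i).card = d := by
  constructor
  · intro x; rw [mem_sS, Finset.mem_Icc]; omega
  · rw [sS, Finset.card_union_of_disjoint, Nat.card_Icc, Nat.card_Icc]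
    · omega
    · rw [Finset.disjoint_left]; intro x; rw [Finset.mem_Icc, Finset.mem_Icc]; omega

lemma sub_swp {n d : ℕ} {A : Finset ℕ} (h : A ⊆ Finset.Icc 1 n ∧ A.card = d) {b z : ℕ}
    (hb : b ∈ A) (hz : z ∉ A) (h1 : 1 ≤ z) (h2 : z ≤ n) :
    swp A b z ⊆ Finset.Icc 1 n ∧ (swp A b z).card = d := by
  refine ⟨?_, by rw [card_swp hb hz, h.2]⟩
  intro x; rw [mem_swp]
  rintro (rfl | hx)
  · exact Finset.mem_Icc.2 ⟨h1, h2⟩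
  · exact h.1 hx.2

/-! ### Shape of a set -/

lemma shape {d m : ℕ} {B : Finset ℕ} (hs : B ⊆ Finset.Icc 1 (d + m)) (hc : B.card = d)
    (hm : 1 ≤ m) : ∃ lo hi : ℕ, ∃ M : Finset ℕ, 1 ≤ lo ∧ lo ≤ hi ∧ hi ≤ d + m ∧ lo ∉ M ∧ hi ∉ M ∧
      (∀ x ∈ M, lo < x ∧ x < hi) ∧ hi + 1 = lo + m + M.card ∧
      (∀ x, x ∈ B ↔ (1 ≤ x ∧ x < lo) ∨ x ∈ M ∨ (hi < x ∧ x ≤ d + m)) := by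
  set N := Finset.Icc 1 (d + m) \ B with hN
  have hNc : N.card = m := by
    rw [hN, Finset.card_sdiff_of_subset hs, Nat.card_Icc]; omega
  have hne : N.Nonempty := Finset.card_pos.1 (by omega)
  have hlo := N.min'_mem hne
  have hhi := N.max'_mem hne
  have hlole : ∀ z ∈ N, N.min' hne ≤ z := fun z hz => N.min'_le z hz
  have hhige : ∀ z ∈ N, z ≤ N.max' hne := fun z hz => N.le_max' z hz
  generalize N.min' hne = lo at *
  generalize N.max' hne = hi at *
  have h1 := hlole hi hhi
  simp only [hN, Finset.mem_sdiff, Finset.mem_Icc] at hlo hhi hlole hhige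
  have hcard : N.card + (B ∩ Finset.Icc lo hi).card = hi + 1 - lo := by
    rw [← Nat.card_Icc, ← Finset.card_union_of_disjoint]
    · congr 1
      ext x
      simp only [hN, Finset.mem_union, Finset.mem_sdiff, Finset.mem_inter, Finset.mem_Icc]
      constructor
      · rintro (h | h)
        · exact ⟨hlole x h, hhige x h⟩
        · exact h.2
      · intro h
        by_cases hx : x ∈ B
        · exact Or.inr ⟨hx, h⟩
        · exact Or.inl ⟨⟨by omega, by omega⟩, hx⟩
    · rw [Finset.disjoint_left]
      intro x hx hx'
      exact (Finset.mem_sdiff.1 hx).2 (Finset.mem_inter.1 hx').1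
  refine ⟨lo, hi, B ∩ Finset.Icc lo hi, by omega, h1, by omega, ?_, ?_, ?_, by omega, ?_⟩
  · intro h; exact hlo.2 (Finset.mem_inter.1 h).1
  · intro h; exact hhi.2 (Finset.mem_inter.1 h).1
  · intro x hx
    rw [Finset.mem_inter, Finset.mem_Icc] at hx
    have : x ≠ lo := fun h => hlo.2 (h ▸ hx.1)
    have : x ≠ hi := fun h => hhi.2 (h ▸ hx.1)
    omega
  · intro x
    rw [Finset.mem_inter, Finset.mem_Icc]
    constructor
    · intro hx
      have := Finset.mem_Icc.1 (hs hx)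
      by_cases h1 : x < lo
      · left; omega
      · by_cases h2 : hi < x
        · right; right; omega
        · right; left; exact ⟨hx, by omega, by omega⟩
    · rintro (h | h | h)
      · by_contra hx
        have := hlole x ⟨by omega, hx⟩
        omega
      · exact h.1
      · by_contra hx
        have := hhige x ⟨by omega, hx⟩
        omega

lemma eq_three {P : Finset (Finset ℕ)} (hP : P.card = 3) {a b c : Finset ℕ} (ha : a ∈ P)
    (hb : b ∈ P) (hc : c ∈ P) (h1 : a ≠ b) (h2 : a ≠ c) (h3 : b ≠ c) : P = {a, b, c} := by
  symm
  apply Finset.eq_of_subset_of_card_le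
  · intro x; simp only [Finset.mem_insert, Finset.mem_singleton]; rintro (rfl | rfl | rfl) <;> assumption
  · rw [hP, Finset.card_eq_three.2 ⟨a, b, c, h1, h2, h3, rfl⟩]

lemma eq_two {P : Finset (Finset ℕ)} (hP : P.card = 2) {a b : Finset ℕ} (ha : a ∈ P)
    (hb : b ∈ P) (h1 : a ≠ b) : P = {a, b} := by
  symm
  apply Finset.eq_of_subset_of_card_le
  · intro x; simp only [Finset.mem_insert, Finset.mem_singleton]; rintro (rfl | rfl) <;> assumption
  · rw [hP, Finset.card_pair h1]

/-- At most two exchanges of a member of a family of size three stay in the family. -/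
lemma no_three {P : Finset (Finset ℕ)} (hP : P.card = 3) {B : Finset ℕ} (hB : B ∈ P)
    {b z b' z' b'' z'' : ℕ} (hb : b ∈ B) (hz : z ∉ B) (hb' : b' ∈ B) (hz' : z' ∉ B) (hb'' : b'' ∈ B)
    (hz'' : z'' ∉ B) (h : swp B b z ∈ P) (h' : swp B b' z' ∈ P) (h'' : swp B b'' z'' ∈ P)
    (n1 : b ≠ b' ∨ z ≠ z') (n2 : b ≠ b'' ∨ z ≠ z'') (n3 : b' ≠ b'' ∨ z' ≠ z'') : False := by
  have e := eq_three hP hB h h' (swp_ne hz).symm (swp_ne hz').symm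
    (fun e => by have := swp_inj hb hz hb' hz' e; omega)
  rw [e] at h''
  simp only [Finset.mem_insert, Finset.mem_singleton] at h''
  rcases h'' with h'' | h'' | h''
  · exact swp_ne hz'' h''
  · have := swp_inj hb'' hz'' hb hz h''; omega
  · have := swp_inj hb'' hz'' hb' hz' h''; omega

lemma no_two {P : Finset (Finset ℕ)} (hP : P.card = 2) {B : Finset ℕ} (hB : B ∈ P)
    {b z b' z' : ℕ} (hb : b ∈ B) (hz : z ∉ B) (hb' : b' ∈ B) (hz' : z' ∉ B)
    (h : swp B b z ∈ P) (h' : swp B b' z' ∈ P)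
    (n1 : b ≠ b' ∨ z ≠ z') : False := by
  have e := eq_two hP hB h (swp_ne hz).symm
  rw [e] at h'
  simp only [Finset.mem_insert, Finset.mem_singleton] at h'
  rcases h' with h'' | h''
  · exact swp_ne hz' h''
  · have := swp_inj hb' hz' hb hz h''; omega

def isSrc (d m : ℕ) (P : Finset (Finset ℕ)) (B : Finset ℕ) : Prop :=
  (∃ i ≤ d, B = sS d m i) ∨
  (∃ i, 1 ≤ i ∧ i ≤ d ∧ B = sU d m i ∧ sS d m i ∈ P) ∨
  (∃ i, i < d ∧ B = sV d m i ∧ sS d m i ∈ P)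

lemma cls2 {d m : ℕ} (hm : 2 ≤ m) {P : Finset (Finset ℕ)} (hs : SubFam (d + m) d P)
    (hg : Good (d + m) P) (hP : P.card = 2) {B : Finset ℕ} (hB : B ∈ P) : isSrc d m P B := by
  obtain ⟨lo, hi, M, h1, h2, h3, hlo, hhi, hM, hc, hmem⟩ := shape (hs B hB).1 (hs B hB).2 (by omega)
  have loc := fun b hb => hg.loc hB (hs B hB).1 (b := b) hb
  have hBM : ∀ b ∈ M, b ∈ B := fun b hb => (hmem b).2 (Or.inr (Or.inl hb))
  have hBlo : lo ∉ B := by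
    rw [hmem]; rintro (h | h | h)
    · omega
    · exact hlo h
    · omega
  have hBhi : hi ∉ B := by
    rw [hmem]; rintro (h | h | h)
    · omega
    · exact hhi h
    · omega
  -- every middle element has an exchange
  have hex : ∀ b ∈ M, swp B b lo ∈ P ∨ swp B b hi ∈ P := by
    intro b hb
    have := hM b hb
    rcases loc b (hBM b hb) with h | h
    · exact Or.inl (h lo h1 hBlo this.1)
    · exact Or.inr (h hi h3 hBhi this.2)
  rcases Nat.lt_or_ge 1 M.card with hcard | hcard
  · obtain ⟨a, b, ha, hb, hab⟩ := Finset.one_lt_card_iff.1 hcard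
    exfalso
    rcases hex a ha with h | h <;> rcases hex b hb with h' | h' <;>
      exact no_two hP hB (hBM a ha) (by assumption) (hBM b hb) (by assumption) h h' (Or.inl hab)
  · rcases Nat.eq_zero_or_pos M.card with h0 | h0
    · left
      have hM0 := Finset.card_eq_zero.1 h0
      subst hM0
      refine ⟨lo - 1, by omega, ?_⟩
      ext x
      simp only [hmem, mem_sS, Finset.notMem_empty, false_or]
      simp at hc
      omega
    · obtain ⟨b, rfl⟩ := Finset.card_eq_one.1 (show M.card = 1 by omega)
      simp only [Finset.mem_singleton, Finset.card_singleton] at *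
      have hb := hM b rfl
      have hbB := hBM b rfl
      rcases loc b hbB with h | h
      · right; left
        have hb1 : b = lo + 1 := by
          by_contra hne
          exact no_two hP hB hbB hBlo hbB (by rw [hmem]; omega) (h lo h1 hBlo hb.1)
            (h (lo + 1) (by omega) (by rw [hmem]; omega) (by omega)) (by omega)
        refine ⟨lo, by omega, by omega, ?_, ?_⟩
        · ext x; simp only [hmem, mem_sU]; omega
        · have e := h lo h1 hBlo hb.1
          convert e using 1
          ext x; simp only [hmem, mem_sS, mem_swp]; omega
      · right; right
        have hb1 : b = hi - 1 := by
          by_contra hne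
          exact no_two hP hB hbB hBhi hbB (by rw [hmem]; omega) (h hi h3 hBhi hb.2)
            (h (hi - 1) (by omega) (by rw [hmem]; omega) (by omega)) (by omega)
        refine ⟨lo - 1, by omega, ?_, ?_⟩
        · ext x; simp only [hmem, mem_sV]; omega
        · have e := h hi h3 hBhi hb.2
          convert e using 1
          ext x; simp only [hmem, mem_sS, mem_swp]; omega

/-- The one-source families of size three. -/
def isOne (d m : ℕ) (P : Finset (Finset ℕ)) : Prop :=
  (∃ i, 1 ≤ i ∧ i ≤ d ∧ P = {sS d m i, sU d m i, sU2 d m i}) ∨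
  (∃ i, 2 ≤ i ∧ i ≤ d ∧ P = {sS d m i, sU d m i, sUU d m i}) ∨
  (∃ i, i < d ∧ P = {sS d m i, sV d m i, sV2 d m i}) ∨
  (∃ i, i + 1 < d ∧ P = {sS d m i, sV d m i, sVV d m i})

lemma cls3 {d m : ℕ} (hm : 3 ≤ m) {P : Finset (Finset ℕ)} (hs : SubFam (d + m) d P)
    (hg : Good (d + m) P) (hP : P.card = 3) {B : Finset ℕ} (hB : B ∈ P) :
    isSrc d m P B ∨ isOne d m P := by
  obtain ⟨lo, hi, M, h1, h2, h3, hlo, hhi, hM, hc, hmem⟩ := shape (hs B hB).1 (hs B hB).2 (by omega)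
  have loc := fun b hb => hg.loc hB (hs B hB).1 (b := b) hb
  have hBM : ∀ b ∈ M, b ∈ B := fun b hb => (hmem b).2 (Or.inr (Or.inl hb))
  have hBlo : lo ∉ B := by
    rw [hmem]; rintro (h | h | h)
    · omega
    · exact hlo h
    · omega
  have hBhi : hi ∉ B := by
    rw [hmem]; rintro (h | h | h)
    · omega
    · exact hhi h
    · omega
  -- every middle element has an exchange
  have hex : ∀ b ∈ M, ∃ z, z ∉ B ∧ swp B b z ∈ P := by
    intro b hb
    have := hM b hb
    rcases loc b (hBM b hb) with h | h
    · exact ⟨lo, hBlo, h lo h1 hBlo this.1⟩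
    · exact ⟨hi, hBhi, h hi h3 hBhi this.2⟩
  have hle : M.card ≤ 2 := by
    by_contra hcard
    obtain ⟨a, b, c, ha, hb, hc, hab, hac, hbc⟩ := Finset.two_lt_card_iff.1 (not_le.1 hcard)
    obtain ⟨z, hz, hz'⟩ := hex a ha
    obtain ⟨w, hw, hw'⟩ := hex b hb
    obtain ⟨v, hv, hv'⟩ := hex c hc
    exact no_three hP hB (hBM a ha) hz (hBM b hb) hw (hBM c hc) hv hz' hw' hv'
      (Or.inl hab) (Or.inl hac) (Or.inl hbc)
  have hcases : M.card = 0 ∨ M.card = 1 ∨ M.card = 2 := by omega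
  rcases hcases with h0 | h0 | h0
  · left; left
    have hM0 := Finset.card_eq_zero.1 h0
    subst hM0
    refine ⟨lo - 1, by omega, ?_⟩
    ext x
    simp only [hmem, mem_sS, Finset.notMem_empty, false_or]
    omega
  · obtain ⟨b, rfl⟩ := Finset.card_eq_one.1 h0
    simp only [Finset.mem_singleton, Finset.card_singleton] at *
    have hb := hM b rfl
    have hbB := hBM b rfl
    rcases loc b hbB with h | h
    · have e := h lo h1 hBlo hb.1
      by_cases hb1 : b = lo + 1
      · left; right; left
        refine ⟨lo, by omega, by omega, ?_, ?_⟩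
        · ext x; simp only [hmem, mem_sU]; omega
        · convert e using 1
          ext x; simp only [hmem, mem_sS, mem_swp]; omega
      · have hB1 : lo + 1 ∉ B := by rw [hmem]; omega
        have e1 := h (lo + 1) (by omega) hB1 (by omega)
        have hb2 : b = lo + 2 := by
          by_contra hne
          have hB2 : lo + 2 ∉ B := by rw [hmem]; omega
          exact no_three hP hB hbB hBlo hbB hB1 hbB hB2 e e1 (h (lo + 2) (by omega) hB2 (by omega))
            (by omega) (by omega) (by omega)
        right; left
        refine ⟨lo, by omega, by omega, ?_⟩
        rw [eq_three hP e e1 hB (fun h => by have := swp_inj hbB hBlo hbB hB1 h; omega)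
          (swp_ne hBlo) (swp_ne hB1)]
        congr 1
        · ext x; simp only [hmem, mem_sS, mem_swp]; omega
        congr 1
        · ext x; simp only [hmem, mem_sU, mem_swp]; omega
        congr 1
        · ext x; simp only [hmem, mem_sU2]; omega
    · have e := h hi h3 hBhi hb.2
      by_cases hb1 : b = hi - 1
      · left; right; right
        refine ⟨lo - 1, by omega, ?_, ?_⟩
        · ext x; simp only [hmem, mem_sV]; omega
        · convert e using 1
          ext x; simp only [hmem, mem_sS, mem_swp]; omega
      · have hB1 : hi - 1 ∉ B := by rw [hmem]; omega
        have e1 := h (hi - 1) (by omega) hB1 (by omega)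
        have hb2 : b = hi - 2 := by
          by_contra hne
          have hB2 : hi - 2 ∉ B := by rw [hmem]; omega
          exact no_three hP hB hbB hBhi hbB hB1 hbB hB2 e e1 (h (hi - 2) (by omega) hB2 (by omega))
            (by omega) (by omega) (by omega)
        right; right; right; left
        refine ⟨lo - 1, by omega, ?_⟩
        rw [eq_three hP e e1 hB (fun h => by have := swp_inj hbB hBhi hbB hB1 h; omega)
          (swp_ne hBhi) (swp_ne hB1)]
        congr 1
        · ext x; simp only [hmem, mem_sS, mem_swp]; omega
        congr 1
        · ext x; simp only [hmem, mem_sV, mem_swp]; omega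
        congr 1
        · ext x; simp only [hmem, mem_sV2]; omega
  · obtain ⟨a, b, hab, rfl⟩ : ∃ a b, a < b ∧ M = {a, b} := by
      obtain ⟨a, b, hab, rfl⟩ := Finset.card_eq_two.1 h0
      rcases Nat.lt_or_gt_of_ne hab with h | h
      · exact ⟨a, b, h, rfl⟩
      · exact ⟨b, a, h, Finset.pair_comm a b⟩
    simp only [Finset.mem_singleton, Finset.mem_insert] at *
    rw [h0] at hc
    have ha := hM a (Or.inl rfl)
    have haB := hBM a (Or.inl rfl)
    have hb := hM b (Or.inr rfl)
    have hbB := hBM b (Or.inr rfl)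
    rcases loc a haB with h | h <;> rcases loc b hbB with h' | h'
    · -- both left
      have e := h lo h1 hBlo ha.1
      have e' := h' lo h1 hBlo hb.1
      have ha1 : a = lo + 1 := by
        by_contra hne
        have hB1 : lo + 1 ∉ B := by rw [hmem]; omega
        exact no_three hP hB haB hBlo hbB hBlo haB hB1 e e' (h (lo + 1) (by omega) hB1 (by omega))
            (by omega) (by omega) (by omega)
      have hb1 : b = lo + 2 := by
        by_contra hne
        have hB1 : lo + 2 ∉ B := by rw [hmem]; omega
        exact no_three hP hB haB hBlo hbB hBlo hbB hB1 e e' (h' (lo + 2) (by omega) hB1 (by omega))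
            (by omega) (by omega) (by omega)
      right; right; left
      refine ⟨lo + 1, by omega, by omega, ?_⟩
      rw [eq_three hP e' e hB (fun h => by have := swp_inj hbB hBlo haB hBlo h; omega)
          (swp_ne hBlo) (swp_ne hBlo)]
      congr 1
      · ext x; simp only [hmem, mem_sS, mem_swp]; omega
      congr 1
      · ext x; simp only [hmem, mem_sU, mem_swp]; omega
      congr 1
      · ext x; simp only [hmem, mem_sUU]; omega
    · -- a left, b right
      exfalso
      have e := h lo h1 hBlo ha.1
      have e' := h' hi h3 hBhi hb.2
      have ha1 : a = lo + 1 := by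
        by_contra hne
        have hB1 : lo + 1 ∉ B := by rw [hmem]; omega
        exact no_three hP hB haB hBlo hbB hBhi haB hB1 e e' (h (lo + 1) (by omega) hB1 (by omega))
            (by omega) (by omega) (by omega)
      have hb1 : b = hi - 1 := by
        by_contra hne
        have hB1 : hi - 1 ∉ B := by rw [hmem]; omega
        exact no_three hP hB haB hBlo hbB hBhi hbB hB1 e e' (h' (hi - 1) (by omega) hB1 (by omega))
            (by omega) (by omega) (by omega)
      have eP := eq_three hP hB e e' (swp_ne hBlo).symm (swp_ne hBhi).symm
        (fun h => by have := swp_inj haB hBlo hbB hBhi h; omega)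
      have hbC : b ∈ swp B a lo := by rw [mem_swp]; right; exact ⟨by omega, hbB⟩
      rcases hg.loc e (hs _ e).1 hbC with h | h
      · have := h (lo + 1) (by omega) (by rw [mem_swp, hmem]; omega) (by omega)
        rw [eP] at this
        simp only [Finset.mem_insert, Finset.mem_singleton] at this
        rcases this with h | h | h
        · have := Finset.ext_iff.1 h lo
          (repeat rw [mem_swp] at this); (repeat rw [hmem] at this); omega
        · have := Finset.ext_iff.1 h (lo + 1)
          (repeat rw [mem_swp] at this); (repeat rw [hmem] at this); omega
        · have := Finset.ext_iff.1 h lo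
          (repeat rw [mem_swp] at this); (repeat rw [hmem] at this); omega
      · have := h hi (by omega) (by rw [mem_swp, hmem]; omega) (by omega)
        rw [eP] at this
        simp only [Finset.mem_insert, Finset.mem_singleton] at this
        rcases this with h | h | h
        · have := Finset.ext_iff.1 h lo
          (repeat rw [mem_swp] at this); (repeat rw [hmem] at this); omega
        · have := Finset.ext_iff.1 h hi
          (repeat rw [mem_swp] at this); (repeat rw [hmem] at this); omega
        · have := Finset.ext_iff.1 h lo
          (repeat rw [mem_swp] at this); (repeat rw [hmem] at this); omega
    · -- a right, b left
      exfalso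
      have e := h hi h3 hBhi ha.2
      have e' := h' lo h1 hBlo hb.1
      obtain ⟨z, hz1, hz2, hza, hzb⟩ : ∃ z, lo < z ∧ z < hi ∧ z ≠ a ∧ z ≠ b := by
        by_cases h1 : lo + 1 ≠ a ∧ lo + 1 ≠ b
        · exact ⟨lo + 1, by omega, by omega, h1.1, h1.2⟩
        · by_cases h2 : lo + 2 ≠ a ∧ lo + 2 ≠ b
          · exact ⟨lo + 2, by omega, by omega, h2.1, h2.2⟩
          · exact ⟨lo + 3, by omega, by omega, by omega, by omega⟩
      have hzB : z ∉ B := by rw [hmem]; omega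
      rcases Nat.lt_or_gt_of_ne hza with hz | hz
      · exact no_three hP hB haB hBhi hbB hBlo hbB hzB e e' (h' z (by omega) hzB (by omega))
          (by omega) (by omega) (by omega)
      · exact no_three hP hB haB hBhi hbB hBlo haB hzB e e' (h z (by omega) hzB (by omega))
          (by omega) (by omega) (by omega)
    · -- both right
      have e := h hi h3 hBhi ha.2
      have e' := h' hi h3 hBhi hb.2
      have hb1 : b = hi - 1 := by
        by_contra hne
        have hB1 : hi - 1 ∉ B := by rw [hmem]; omega
        exact no_three hP hB haB hBhi hbB hBhi hbB hB1 e e' (h' (hi - 1) (by omega) hB1 (by omega))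
            (by omega) (by omega) (by omega)
      have ha1 : a = hi - 2 := by
        by_contra hne
        have hB1 : hi - 2 ∉ B := by rw [hmem]; omega
        exact no_three hP hB haB hBhi hbB hBhi haB hB1 e e' (h (hi - 2) (by omega) hB1 (by omega))
            (by omega) (by omega) (by omega)
      right; right; right; right
      refine ⟨lo - 1, by omega, ?_⟩
      rw [eq_three hP e e' hB (fun h => by have := swp_inj haB hBhi hbB hBhi h; omega)
          (swp_ne hBhi) (swp_ne hBhi)]
      congr 1
      · ext x; simp only [hmem, mem_sS, mem_swp]; omega
      congr 1
      · ext x; simp only [hmem, mem_sV, mem_swp]; omega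
      congr 1
      · ext x; simp only [hmem, mem_sVV]; omega

/-! ### Families -/

def isFam2 (d m : ℕ) (P : Finset (Finset ℕ)) : Prop :=
  (∃ i j, i + 2 ≤ j ∧ j ≤ d ∧ P = {sS d m i, sS d m j}) ∨
  (∃ i, 1 ≤ i ∧ i ≤ d ∧ P = {sS d m i, sU d m i}) ∨
  (∃ i, i < d ∧ P = {sS d m i, sV d m i})

def isFam3 (d m : ℕ) (P : Finset (Finset ℕ)) : Prop :=
  (∃ i j k, i + 2 ≤ j ∧ j + 2 ≤ k ∧ k ≤ d ∧ P = {sS d m i, sS d m j, sS d m k}) ∨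
  (∃ i j, 1 ≤ i ∧ i ≤ d ∧ j ≤ d ∧ (i + 2 ≤ j ∨ j + 2 ≤ i) ∧
    P = {sS d m i, sU d m i, sS d m j}) ∨
  (∃ i j, i < d ∧ j ≤ d ∧ (i + 2 ≤ j ∨ j + 2 ≤ i) ∧ P = {sS d m i, sV d m i, sS d m j}) ∨
  (∃ i, 1 ≤ i ∧ i < d ∧ P = {sS d m i, sU d m i, sV d m i}) ∨
  isOne d m P

lemma fset_ne {A A' : Finset ℕ} (z : ℕ) (h : z ∈ A) (h' : z ∉ A') : A ≠ A' := by
  rintro rfl; exact h' h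

lemma sS_ne_sS {d m i j : ℕ} (hm : 1 ≤ m) (hi : i ≤ d) (hj : j ≤ d) (h : i ≠ j) :
    sS d m i ≠ sS d m j := by
  rcases Nat.lt_or_gt_of_ne h with h | h
  · exact (fset_ne (i + 1) (by rw [mem_sS]; omega) (by rw [mem_sS]; omega)).symm
  · exact fset_ne (j + 1) (by rw [mem_sS]; omega) (by rw [mem_sS]; omega)

lemma sS_ne_sU {d m i j : ℕ} (hm : 2 ≤ m) (hi : 1 ≤ i) (hi' : i ≤ d) (hj : j ≤ d) :
    sS d m j ≠ sU d m i := by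
  rcases Nat.lt_or_ge j i with h | h
  · exact (fset_ne (i + m) (by rw [mem_sS]; omega) (by rw [mem_sU]; omega))
  · exact fset_ne i (by rw [mem_sS]; omega) (by rw [mem_sU]; omega)

lemma sS_ne_sV {d m i j : ℕ} (hm : 2 ≤ m) (hi' : i < d) (hj : j ≤ d) :
    sS d m j ≠ sV d m i := by
  rcases Nat.lt_or_ge i j with h | h
  · exact (fset_ne (i + 1) (by rw [mem_sS]; omega) (by rw [mem_sV]; omega))
  · exact fset_ne (m + i + 1) (by rw [mem_sS]; omega) (by rw [mem_sV]; omega)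

/-- all exchanges between two neighbouring sources -/
lemma no_adj_aux {d m : ℕ} {P : Finset (Finset ℕ)}
    (hg : Good (d + m) P) {i : ℕ} (hi : i + 1 ≤ d)
    (h1 : sS d m i ∈ P) (h2 : sS d m (i + 1) ∈ P) :
    ∀ z, i + 1 < z → z ≤ i + 1 + m → swp (sS d m (i + 1)) (i + 1) z ∈ P := by
  intro z hz hz'
  have hb : i + 1 ∈ sS d m (i + 1) := by rw [mem_sS]; omega
  have e1 : swp (sS d m (i + 1)) (i + 1) (i + 1) = sS d m (i + 1) := Finset.insert_erase hb
  have e2 : swp (sS d m (i + 1)) (i + 1) (i + 1 + m) = sS d m i := by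
    ext x; rw [mem_swp, mem_sS, mem_sS]; omega
  have hN : ∀ x, i + 1 ≤ x → x ≤ i + 1 + m →
      x ∈ Finset.Icc 1 (d + m) \ (sS d m (i + 1)).erase (i + 1) := by
    intro x hx hx'
    rw [Finset.mem_sdiff, Finset.mem_Icc, Finset.mem_erase, mem_sS]; omega
  rcases hg _ h2 _ hb with h | h
  · rcases Nat.lt_or_ge z (i + 1 + m) with h' | h'
    · exact h z (hN z (by omega) (by omega)) (i + 1 + m) (hN _ (by omega) (by omega)) h'
        (by rw [e2]; exact h1)
    · have : z = i + 1 + m := by omega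
      rw [this, e2]; exact h1
  · exact h (i + 1) (hN _ (by omega) (by omega)) z (hN z (by omega) (by omega)) hz
      (by rw [e1]; exact h2)

lemma no_adj3 {d m : ℕ} (hm : 3 ≤ m) {P : Finset (Finset ℕ)}
    (hg : Good (d + m) P) (hP : P.card = 3) {i : ℕ} (hi : i + 1 ≤ d)
    (h1 : sS d m i ∈ P) (h2 : sS d m (i + 1) ∈ P) : False := by
  have h := no_adj_aux hg hi h1 h2
  have hb : i + 1 ∈ sS d m (i + 1) := by rw [mem_sS]; omega
  exact no_three hP h2 hb (by rw [mem_sS]; omega) hb (by rw [mem_sS]; omega) hb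
    (by rw [mem_sS]; omega) (h (i + 2) (by omega) (by omega)) (h (i + 3) (by omega) (by omega))
    (h (i + 4) (by omega) (by omega)) (by omega) (by omega) (by omega)

lemma no_adj2 {d m : ℕ} (hm : 2 ≤ m) {P : Finset (Finset ℕ)}
    (hg : Good (d + m) P) (hP : P.card = 2) {i : ℕ} (hi : i + 1 ≤ d)
    (h1 : sS d m i ∈ P) (h2 : sS d m (i + 1) ∈ P) : False := by
  have h := no_adj_aux hg hi h1 h2
  have hb : i + 1 ∈ sS d m (i + 1) := by rw [mem_sS]; omega
  exact no_two hP h2 hb (by rw [mem_sS]; omega) hb (by rw [mem_sS]; omega)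
    (h (i + 2) (by omega) (by omega)) (h (i + 3) (by omega) (by omega)) (by omega)

lemma far_of {d i j : ℕ} {Q : ℕ → Prop} (h : ∀ k, k + 1 ≤ d → Q k → Q (k + 1) → False)
    (hi : i ≤ d) (hj : j ≤ d) (hij : i ≠ j) (h1 : Q i) (h2 : Q j) : i + 2 ≤ j ∨ j + 2 ≤ i := by
  by_contra hc
  rcases Nat.lt_or_gt_of_ne hij with hl | hl
  · have e : j = i + 1 := by omega
    subst e; exact h i hj h1 h2
  · have e : i = j + 1 := by omega
    subst e; exact h j hi h2 h1

lemma fam2_of {d m : ℕ} (hm : 2 ≤ m) {P : Finset (Finset ℕ)} (hs : SubFam (d + m) d P)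
    (hg : Good (d + m) P) (hP : P.card = 2) : isFam2 d m P := by
  by_cases hU : ∃ i, 1 ≤ i ∧ i ≤ d ∧ sU d m i ∈ P ∧ sS d m i ∈ P
  · obtain ⟨i, h1, h2, h3, h4⟩ := hU
    exact Or.inr (Or.inl ⟨i, h1, h2, eq_two hP h4 h3 (sS_ne_sU hm h1 h2 h2)⟩)
  by_cases hV : ∃ i, i < d ∧ sV d m i ∈ P ∧ sS d m i ∈ P
  · obtain ⟨i, h2, h3, h4⟩ := hV
    exact Or.inr (Or.inr ⟨i, h2, eq_two hP h4 h3 (sS_ne_sV hm h2 h2.le)⟩)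
  have hall : ∀ B ∈ P, ∃ i ≤ d, B = sS d m i := by
    intro B hB
    rcases cls2 hm hs hg hP hB with h | ⟨i, h1, h2, rfl, h3⟩ | ⟨i, h1, rfl, h3⟩
    · exact h
    · exact absurd ⟨i, h1, h2, hB, h3⟩ hU
    · exact absurd ⟨i, h1, hB, h3⟩ hV
  left
  obtain ⟨A, B, hAB, rfl⟩ := Finset.card_eq_two.1 hP
  obtain ⟨i, hi, rfl⟩ := hall A (by simp)
  obtain ⟨j, hj, rfl⟩ := hall B (by simp)
  have hij : i ≠ j := by rintro rfl; exact hAB rfl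
  have := far_of (Q := fun k => sS d m k ∈ ({sS d m i, sS d m j} : Finset (Finset ℕ)))
    (fun k hk h1 h2 => no_adj2 hm hg hP hk h1 h2) hi hj hij (by simp) (by simp)
  rcases this with h | h
  · exact ⟨i, j, h, hj, rfl⟩
  · exact ⟨j, i, h, hi, Finset.pair_comm _ _⟩

lemma sU_inj {d m i j : ℕ} (hm : 2 ≤ m) (hi : 1 ≤ i) (hi' : i ≤ d) (hj : 1 ≤ j) (hj' : j ≤ d)
    (h : sU d m i = sU d m j) : i = j := by
  by_contra hne
  rcases Nat.lt_or_gt_of_ne hne with hl | hl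
  · exact (fset_ne i (A := sU d m j) (A' := sU d m i) (by rw [mem_sU]; omega) (by rw [mem_sU]; omega)) h.symm
  · exact (fset_ne j (A := sU d m i) (A' := sU d m j) (by rw [mem_sU]; omega) (by rw [mem_sU]; omega)) h

lemma sV_inj {d m i j : ℕ} (hm : 2 ≤ m) (hi' : i < d) (hj' : j < d)
    (h : sV d m i = sV d m j) : i = j := by
  by_contra hne
  rcases Nat.lt_or_gt_of_ne hne with hl | hl
  · exact (fset_ne (m + j + 1) (A := sV d m i) (A' := sV d m j) (by rw [mem_sV]; omega) (by rw [mem_sV]; omega)) h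
  · exact (fset_ne (m + i + 1) (A := sV d m j) (A' := sV d m i) (by rw [mem_sV]; omega) (by rw [mem_sV]; omega)) h.symm

lemma sU_ne_sV {d m i j : ℕ} (hm : 3 ≤ m) (hi : 1 ≤ i) (hi' : i ≤ d) (hj' : j < d) :
    sU d m i ≠ sV d m j := by
  rcases Nat.lt_or_ge i (j + 1) with hl | hl
  · exact (fset_ne (m + j + 1) (A := sU d m i) (A' := sV d m j) (by rw [mem_sU]; omega) (by rw [mem_sV]; omega))
  · rcases Nat.lt_or_ge (j + 1) i with hl' | hl'
    · exact (fset_ne (j + 1) (A := sU d m i) (A' := sV d m j) (by rw [mem_sU]; omega) (by rw [mem_sV]; omega))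
    · exact (fset_ne (j + 2) (A := sU d m i) (A' := sV d m j) (by rw [mem_sU]; omega) (by rw [mem_sV]; omega))

lemma sort3 {d : ℕ} (f : ℕ → Finset ℕ) {i j k : ℕ} (hi : i ≤ d) (hj : j ≤ d) (hk : k ≤ d)
    (f1 : i + 2 ≤ j ∨ j + 2 ≤ i) (f2 : i + 2 ≤ k ∨ k + 2 ≤ i) (f3 : j + 2 ≤ k ∨ k + 2 ≤ j) :
    ∃ a b c, a + 2 ≤ b ∧ b + 2 ≤ c ∧ c ≤ d ∧
      ({f i, f j, f k} : Finset (Finset ℕ)) = {f a, f b, f c} := by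
  have p1 : ∀ x y z : Finset ℕ, ({x, y, z} : Finset (Finset ℕ)) = {x, z, y} := by
    intro x y z; rw [Finset.pair_comm]
  have p2 : ∀ x y z : Finset ℕ, ({x, y, z} : Finset (Finset ℕ)) = {y, x, z} := by
    intro x y z; rw [Finset.insert_comm]
  rcases f1 with f1 | f1 <;> rcases f2 with f2 | f2 <;> rcases f3 with f3 | f3
  · exact ⟨i, j, k, f1, f3, hk, rfl⟩
  · exact ⟨i, k, j, f2, f3, hj, p1 _ _ _⟩
  · omega
  · exact ⟨k, i, j, f2, f1, hj, by rw [p1, p2]⟩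
  · exact ⟨j, i, k, f1, f2, hk, p2 _ _ _⟩
  · omega
  · exact ⟨j, k, i, f3, f2, hi, by rw [p2, p1]⟩
  · exact ⟨k, j, i, f3, f1, hi, by rw [p1, p2, p1]⟩

lemma fam3_of {d m : ℕ} (hm : 3 ≤ m) {P : Finset (Finset ℕ)} (hs : SubFam (d + m) d P)
    (hg : Good (d + m) P) (hP : P.card = 3) : isFam3 d m P := by
  by_cases hO : isOne d m P
  · exact Or.inr (Or.inr (Or.inr (Or.inr hO)))
  have hcl : ∀ B ∈ P, isSrc d m P B := fun B hB =>
    (cls3 hm hs hg hP hB).resolve_right hO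
  have hfar : ∀ i j, i ≤ d → j ≤ d → i ≠ j → sS d m i ∈ P → sS d m j ∈ P →
      i + 2 ≤ j ∨ j + 2 ≤ i := fun i j hi hj hij h1 h2 =>
    far_of (Q := fun k => sS d m k ∈ P)
      (fun k hk h1 h2 => no_adj3 hm hg hP hk h1 h2) hi hj hij h1 h2
  -- a third element
  have hthird : ∀ X Y : Finset ℕ, ∃ Z ∈ P, Z ≠ X ∧ Z ≠ Y := by
    intro X Y
    by_contra hc
    push Not at hc
    have : P ⊆ {X, Y} := by
      intro Z hZ
      rw [Finset.mem_insert, Finset.mem_singleton]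
      by_cases h : Z = X
      · exact Or.inl h
      · exact Or.inr (hc Z hZ h)
    have := Finset.card_le_card this
    have := Finset.card_le_two (a := X) (b := Y)
    omega
  by_cases hU : ∃ i, 1 ≤ i ∧ i ≤ d ∧ sU d m i ∈ P ∧ sS d m i ∈ P
  · obtain ⟨i, h1, h2, h3, h4⟩ := hU
    have n1 := sS_ne_sU (m := m) (by omega) h1 h2 h2
    obtain ⟨Z, hZ, z1, z2⟩ := hthird (sS d m i) (sU d m i)
    have e := eq_three hP h4 h3 hZ n1 z1.symm z2.symm
    rcases hcl Z hZ with ⟨j, hj, rfl⟩ | ⟨j, hj, hj', rfl, hjs⟩ | ⟨j, hj, rfl, hjs⟩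
    · right; left
      exact ⟨i, j, h1, h2, hj, hfar i j h2 hj (by rintro rfl; exact z1 rfl) h4 hZ, e⟩
    · exfalso
      rw [e] at hjs
      simp only [Finset.mem_insert, Finset.mem_singleton] at hjs
      rcases hjs with h | h | h
      · exact sS_ne_sS (by omega) hj' h2 (by rintro rfl; exact z2 rfl) h
      · exact sS_ne_sU (by omega) h1 h2 hj' h
      · exact sS_ne_sU (by omega) hj hj' hj' h
    · right; right; right; left
      have hij : j = i := by
        by_contra hne
        rw [e] at hjs
        simp only [Finset.mem_insert, Finset.mem_singleton] at hjs
        rcases hjs with h | h | h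
        · exact sS_ne_sS (by omega) hj.le h2 hne h
        · exact sS_ne_sU (by omega) h1 h2 hj.le h
        · exact sS_ne_sV (by omega) hj hj.le h
      subst hij
      exact ⟨j, h1, hj, e⟩
  by_cases hV : ∃ i, i < d ∧ sV d m i ∈ P ∧ sS d m i ∈ P
  · obtain ⟨i, h2, h3, h4⟩ := hV
    have n1 := sS_ne_sV (m := m) (by omega) h2 h2.le
    obtain ⟨Z, hZ, z1, z2⟩ := hthird (sS d m i) (sV d m i)
    have e := eq_three hP h4 h3 hZ n1 z1.symm z2.symm
    rcases hcl Z hZ with ⟨j, hj, rfl⟩ | ⟨j, hj, hj', rfl, hjs⟩ | ⟨j, hj, rfl, hjs⟩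
    · right; right; left
      exact ⟨i, j, h2, hj, hfar i j h2.le hj (by rintro rfl; exact z1 rfl) h4 hZ, e⟩
    · exact absurd ⟨j, hj, hj', hZ, hjs⟩ hU
    · exfalso
      rw [e] at hjs
      simp only [Finset.mem_insert, Finset.mem_singleton] at hjs
      rcases hjs with h | h | h
      · exact sS_ne_sS (by omega) hj.le h2.le (by rintro rfl; exact z2 rfl) h
      · exact sS_ne_sV (by omega) h2 hj.le h
      · exact sS_ne_sV (by omega) hj hj.le h
  have hall : ∀ B ∈ P, ∃ i ≤ d, B = sS d m i := by
    intro B hB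
    rcases hcl B hB with h | ⟨i, h1, h2, rfl, h3⟩ | ⟨i, h1, rfl, h3⟩
    · exact h
    · exact absurd ⟨i, h1, h2, hB, h3⟩ hU
    · exact absurd ⟨i, h1, hB, h3⟩ hV
  left
  obtain ⟨A, B, C, hAB, hAC, hBC, rfl⟩ := Finset.card_eq_three.1 hP
  obtain ⟨i, hi, rfl⟩ := hall A (by simp)
  obtain ⟨j, hj, rfl⟩ := hall B (by simp)
  obtain ⟨k, hk, rfl⟩ := hall C (by simp)
  have hij : i ≠ j := by rintro rfl; exact hAB rfl
  have hik : i ≠ k := by rintro rfl; exact hAC rfl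
  have hjk : j ≠ k := by rintro rfl; exact hBC rfl
  have f1 := hfar i j hi hj hij (by simp) (by simp)
  have f2 := hfar i k hi hk hik (by simp) (by simp)
  have f3 := hfar j k hj hk hjk (by simp) (by simp)
  exact sort3 (sS d m) hi hj hk f1 f2 f3

/-! ### The families are good -/

def LocAt (n : ℕ) (P : Finset (Finset ℕ)) (A : Finset ℕ) : Prop :=
  ∀ b ∈ A, (∀ z, 1 ≤ z → z ∉ A → z < b → swp A b z ∈ P) ∨
    (∀ z, z ≤ n → z ∉ A → b < z → swp A b z ∈ P)

def NB (n : ℕ) (A A' : Finset ℕ) : Prop := ¬ Bad n A A' ∧ ¬ Bad n A' A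

lemma NB.symm {n : ℕ} {A A' : Finset ℕ} (h : NB n A A') : NB n A' A := ⟨h.2, h.1⟩

lemma not_bad_self (n : ℕ) (A : Finset ℕ) : ¬ Bad n A A := by
  rintro ⟨b, b', -, h1, h2, -⟩; exact h2 h1

lemma nb_two {n : ℕ} {A A' : Finset ℕ} (x y : ℕ) (hxy : x ≠ y) (hx : x ∈ A) (hx' : x ∉ A')
    (hy : y ∈ A) (hy' : y ∉ A') : NB n A A' := by
  constructor
  · rintro ⟨b, b', -, -, -, -, h4, h5, -⟩
    have a1 : x = b := by
      by_contra h; exact hx' ((h5 x h (by rintro rfl; exact h4 hx)).1 hx)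
    have a2 : y = b := by
      by_contra h; exact hy' ((h5 y h (by rintro rfl; exact h4 hy)).1 hy)
    exact hxy (a1.trans a2.symm)
  · rintro ⟨b, b', -, h2, -, -, h4, h5, -⟩
    have a1 : x = b' := by
      by_contra h; exact hx' ((h5 x (by rintro rfl; exact hx' h2) h).2 hx)
    have a2 : y = b' := by
      by_contra h; exact hy' ((h5 y (by rintro rfl; exact hy' h2) h).2 hy)
    exact hxy (a1.trans a2.symm)

lemma nb_hi {n : ℕ} {A A' : Finset ℕ} (t : ℕ) (htn : t ≤ n) (ht : t ∉ A) (ht' : t ∉ A')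
    (h : ∀ z, t < z → (z ∈ A ↔ z ∈ A')) : NB n A A' := by
  constructor
  · rintro ⟨b, b', -, -, -, h3, h4, -, -, h7⟩
    rcases lt_trichotomy b' t with hl | rfl | hl
    · exact ht (h7 t hl htn)
    · exact ht' h3
    · exact h4 ((h b' hl).2 h3)
  · rintro ⟨b, b', -, -, -, h3, h4, -, -, h7⟩
    rcases lt_trichotomy b' t with hl | rfl | hl
    · exact ht' (h7 t hl htn)
    · exact ht h3
    · exact h4 ((h b' hl).1 h3)

lemma nb_lo {n : ℕ} {A A' : Finset ℕ} (t : ℕ) (htn : 1 ≤ t) (ht : t ∉ A) (ht' : t ∉ A')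
    (h : ∀ z, z < t → (z ∈ A ↔ z ∈ A')) : NB n A A' := by
  constructor
  · rintro ⟨b, b', -, h1, h2, -, -, -, h6, -⟩
    rcases lt_trichotomy b t with hl | rfl | hl
    · exact h2 ((h b hl).1 h1)
    · exact ht h1
    · exact ht (h6 t htn hl)
  · rintro ⟨b, b', -, h1, h2, -, -, -, h6, -⟩
    rcases lt_trichotomy b t with hl | rfl | hl
    · exact h2 ((h b hl).2 h1)
    · exact ht' h1
    · exact ht' (h6 t htn hl)

lemma good3 {n d : ℕ} {A B C : Finset ℕ} (sA : A ⊆ Finset.Icc 1 n ∧ A.card = d)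
    (sB : B ⊆ Finset.Icc 1 n ∧ B.card = d) (sC : C ⊆ Finset.Icc 1 n ∧ C.card = d)
    (hAB : A ≠ B) (hAC : A ≠ C) (hBC : B ≠ C)
    (lA : ∀ P, A ∈ P → B ∈ P → C ∈ P → LocAt n P A)
    (lB : ∀ P, A ∈ P → B ∈ P → C ∈ P → LocAt n P B)
    (lC : ∀ P, A ∈ P → B ∈ P → C ∈ P → LocAt n P C)
    (nAB : NB n A B) (nAC : NB n A C) (nBC : NB n B C) :
    (SubFam n d {A, B, C} ∧ Good n {A, B, C}) ∧ ({A, B, C} : Finset (Finset ℕ)).card = 3 := by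
  have hs : SubFam n d {A, B, C} := by
    intro X hX
    simp only [Finset.mem_insert, Finset.mem_singleton] at hX
    rcases hX with rfl | rfl | rfl <;> assumption
  refine ⟨⟨hs, good_of hs ?_ ?_⟩, Finset.card_eq_three.2 ⟨A, B, C, hAB, hAC, hBC, rfl⟩⟩
  · intro X hX
    simp only [Finset.mem_insert, Finset.mem_singleton] at hX
    rcases hX with rfl | rfl | rfl
    · exact lA _ (by simp) (by simp) (by simp)
    · exact lB _ (by simp) (by simp) (by simp)
    · exact lC _ (by simp) (by simp) (by simp)
  · intro X hX Y hY
    simp only [Finset.mem_insert, Finset.mem_singleton] at hX hY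
    rcases hX with rfl | rfl | rfl <;> rcases hY with rfl | rfl | rfl
    · exact not_bad_self _ _
    · exact nAB.1
    · exact nAC.1
    · exact nAB.2
    · exact not_bad_self _ _
    · exact nBC.1
    · exact nAC.2
    · exact nBC.2
    · exact not_bad_self _ _

lemma good2 {n d : ℕ} {A B : Finset ℕ} (sA : A ⊆ Finset.Icc 1 n ∧ A.card = d)
    (sB : B ⊆ Finset.Icc 1 n ∧ B.card = d) (hAB : A ≠ B)
    (lA : ∀ P, A ∈ P → B ∈ P → LocAt n P A) (lB : ∀ P, A ∈ P → B ∈ P → LocAt n P B)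
    (nAB : NB n A B) :
    (SubFam n d {A, B} ∧ Good n {A, B}) ∧ ({A, B} : Finset (Finset ℕ)).card = 2 := by
  have hs : SubFam n d {A, B} := by
    intro X hX
    simp only [Finset.mem_insert, Finset.mem_singleton] at hX
    rcases hX with rfl | rfl <;> assumption
  refine ⟨⟨hs, good_of hs ?_ ?_⟩, Finset.card_eq_two.2 ⟨A, B, hAB, rfl⟩⟩
  · intro X hX
    simp only [Finset.mem_insert, Finset.mem_singleton] at hX
    rcases hX with rfl | rfl
    · exact lA _ (by simp) (by simp)
    · exact lB _ (by simp) (by simp)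
  · intro X hX Y hY
    simp only [Finset.mem_insert, Finset.mem_singleton] at hX hY
    rcases hX with rfl | rfl <;> rcases hY with rfl | rfl
    · exact not_bad_self _ _
    · exact nAB.1
    · exact nAB.2
    · exact not_bad_self _ _

lemma locS {d m i : ℕ} (P : Finset (Finset ℕ)) : LocAt (d + m) P (sS d m i) := by
  intro b hb
  rw [mem_sS] at hb
  rcases Nat.lt_or_ge i b with h | h
  · right; intro z h1 h2 h3; exfalso; rw [mem_sS] at h2; omega
  · left; intro z h1 h2 h3; exfalso; rw [mem_sS] at h2; omega

lemma swp_swp {A : Finset ℕ} {a b c : ℕ} (hb : b ∉ A) (hab : a ∈ A) :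
    swp (swp A a b) b c = swp A a c := by
  ext x; rw [mem_swp, mem_swp, mem_swp]
  have : x = b → x ∉ A := by rintro rfl; exact hb
  tauto

lemma swp_self {A : Finset ℕ} {a : ℕ} (h : a ∈ A) : swp A a a = A := Finset.insert_erase h

lemma locU {d m i : ℕ} (P : Finset (Finset ℕ)) (hm : 2 ≤ m) (h1 : 1 ≤ i) (h2 : i ≤ d)
    (hS : sS d m i ∈ P) : LocAt (d + m) P (sU d m i) := by
  intro b hb
  have hb' := hb
  rw [mem_sU] at hb
  by_cases eb : b = i + 1
  · left; intro z h1 h2 h3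
    have h2' := h2
    rw [mem_sU] at h2
    have hz : z = i := by omega
    · have e : swp (sU d m i) (i + 1) (i) = sS d m i := by
        ext x; rw [mem_swp, mem_sU, mem_sS]; omega
      rw [eb, hz, e]; exact hS
  rcases Nat.lt_or_ge i b with h | h
  · right; intro z h1 h2 h3; exfalso; rw [mem_sU] at h2; omega
  · left; intro z h1 h2 h3; exfalso; rw [mem_sU] at h2; omega

lemma locV {d m i : ℕ} (P : Finset (Finset ℕ)) (hm : 2 ≤ m) (h2 : i < d)
    (hS : sS d m i ∈ P) : LocAt (d + m) P (sV d m i) := by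
  intro b hb
  have hb' := hb
  rw [mem_sV] at hb
  by_cases eb : b = m + i
  · right; intro z h1 h2 h3
    have h2' := h2
    rw [mem_sV] at h2
    have hz : z = m + i + 1 := by omega
    · have e : swp (sV d m i) (m + i) (m + i + 1) = sS d m i := by
        ext x; rw [mem_swp, mem_sV, mem_sS]; omega
      rw [eb, hz, e]; exact hS
  rcases Nat.lt_or_ge i b with h | h
  · right; intro z h1 h2 h3; exfalso; rw [mem_sV] at h2; omega
  · left; intro z h1 h2 h3; exfalso; rw [mem_sV] at h2; omega

lemma locU2 {d m i : ℕ} (P : Finset (Finset ℕ)) (hm : 3 ≤ m) (h1 : 1 ≤ i) (h2 : i ≤ d)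
    (hS : sS d m i ∈ P) (hU : sU d m i ∈ P) : LocAt (d + m) P (sU2 d m i) := by
  intro b hb
  have hb' := hb
  rw [mem_sU2] at hb
  by_cases eb : b = i + 2
  · left; intro z h1 h2 h3
    have h2' := h2
    rw [mem_sU2] at h2
    have hz : z = i ∨ z = i + 1 := by omega
    rcases hz with hz | hz
    · have e : swp (sU2 d m i) (i + 2) (i) = sS d m i := by
        ext x; rw [mem_swp, mem_sU2, mem_sS]; omega
      rw [eb, hz, e]; exact hS
    · have e : swp (sU2 d m i) (i + 2) (i + 1) = sU d m i := by
        ext x; rw [mem_swp, mem_sU2, mem_sU]; omega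
      rw [eb, hz, e]; exact hU
  rcases Nat.lt_or_ge i b with h | h
  · right; intro z h1 h2 h3; exfalso; rw [mem_sU2] at h2; omega
  · left; intro z h1 h2 h3; exfalso; rw [mem_sU2] at h2; omega

lemma locV2 {d m i : ℕ} (P : Finset (Finset ℕ)) (hm : 3 ≤ m) (h2 : i < d)
    (hS : sS d m i ∈ P) (hV : sV d m i ∈ P) : LocAt (d + m) P (sV2 d m i) := by
  intro b hb
  have hb' := hb
  rw [mem_sV2] at hb
  by_cases eb : b = m + i - 1
  · right; intro z h1 h2 h3
    have h2' := h2
    rw [mem_sV2] at h2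
    have hz : z = m + i ∨ z = m + i + 1 := by omega
    rcases hz with hz | hz
    · have e : swp (sV2 d m i) (m + i - 1) (m + i) = sV d m i := by
        ext x; rw [mem_swp, mem_sV2, mem_sV]; omega
      rw [eb, hz, e]; exact hV
    · have e : swp (sV2 d m i) (m + i - 1) (m + i + 1) = sS d m i := by
        ext x; rw [mem_swp, mem_sV2, mem_sS]; omega
      rw [eb, hz, e]; exact hS
  rcases Nat.lt_or_ge i b with h | h
  · right; intro z h1 h2 h3; exfalso; rw [mem_sV2] at h2; omega
  · left; intro z h1 h2 h3; exfalso; rw [mem_sV2] at h2; omega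

lemma locUU {d m i : ℕ} (P : Finset (Finset ℕ)) (hm : 3 ≤ m) (h1 : 2 ≤ i) (h2 : i ≤ d)
    (hS : sS d m i ∈ P) (hU : sU d m i ∈ P) : LocAt (d + m) P (sUU d m i) := by
  intro b hb
  have hb' := hb
  rw [mem_sUU] at hb
  by_cases eb : b = i + 1
  · left; intro z h1 h2 h3
    have h2' := h2
    rw [mem_sUU] at h2
    have hz : z = i - 1 := by omega
    · have e : swp (sUU d m i) (i + 1) (i - 1) = sS d m i := by
        ext x; rw [mem_swp, mem_sUU, mem_sS]; omega
      rw [eb, hz, e]; exact hS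
  by_cases eb : b = i
  · left; intro z h1 h2 h3
    have h2' := h2
    rw [mem_sUU] at h2
    have hz : z = i - 1 := by omega
    · have e : swp (sUU d m i) (i) (i - 1) = sU d m i := by
        ext x; rw [mem_swp, mem_sUU, mem_sU]; omega
      rw [eb, hz, e]; exact hU
  rcases Nat.lt_or_ge i b with h | h
  · right; intro z h1 h2 h3; exfalso; rw [mem_sUU] at h2; omega
  · left; intro z h1 h2 h3; exfalso; rw [mem_sUU] at h2; omega

lemma locVV {d m i : ℕ} (P : Finset (Finset ℕ)) (hm : 3 ≤ m) (h2 : i + 1 < d)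
    (hS : sS d m i ∈ P) (hV : sV d m i ∈ P) : LocAt (d + m) P (sVV d m i) := by
  intro b hb
  have hb' := hb
  rw [mem_sVV] at hb
  by_cases eb : b = m + i
  · right; intro z h1 h2 h3
    have h2' := h2
    rw [mem_sVV] at h2
    have hz : z = m + i + 2 := by omega
    · have e : swp (sVV d m i) (m + i) (m + i + 2) = sS d m i := by
        ext x; rw [mem_swp, mem_sVV, mem_sS]; omega
      rw [eb, hz, e]; exact hS
  by_cases eb : b = m + i + 1
  · right; intro z h1 h2 h3
    have h2' := h2
    rw [mem_sVV] at h2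
    have hz : z = m + i + 2 := by omega
    · have e : swp (sVV d m i) (m + i + 1) (m + i + 2) = sV d m i := by
        ext x; rw [mem_swp, mem_sVV, mem_sV]; omega
      rw [eb, hz, e]; exact hV
  rcases Nat.lt_or_ge i b with h | h
  · right; intro z h1 h2 h3; exfalso; rw [mem_sVV] at h2; omega
  · left; intro z h1 h2 h3; exfalso; rw [mem_sVV] at h2; omega

lemma sub_sU {d m i : ℕ} (hm : 2 ≤ m) (h1 : 1 ≤ i) (h2 : i ≤ d) :
    sU d m i ⊆ Finset.Icc 1 (d + m) ∧ (sU d m i).card = d :=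
  sub_swp (sub_sS (by omega)) (by rw [mem_sS]; omega) (by rw [mem_sS]; omega) (by omega) (by omega)

lemma sub_sV {d m i : ℕ} (hm : 2 ≤ m) (h2 : i < d) :
    sV d m i ⊆ Finset.Icc 1 (d + m) ∧ (sV d m i).card = d :=
  sub_swp (sub_sS (by omega)) (by rw [mem_sS]; omega) (by rw [mem_sS]; omega) (by omega) (by omega)

lemma sub_sU2 {d m i : ℕ} (hm : 3 ≤ m) (h1 : 1 ≤ i) (h2 : i ≤ d) :
    sU2 d m i ⊆ Finset.Icc 1 (d + m) ∧ (sU2 d m i).card = d :=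
  sub_swp (sub_sS (by omega)) (by rw [mem_sS]; omega) (by rw [mem_sS]; omega) (by omega) (by omega)

lemma sub_sV2 {d m i : ℕ} (hm : 3 ≤ m) (h2 : i < d) :
    sV2 d m i ⊆ Finset.Icc 1 (d + m) ∧ (sV2 d m i).card = d :=
  sub_swp (sub_sS (by omega)) (by rw [mem_sS]; omega) (by rw [mem_sS]; omega) (by omega) (by omega)

lemma sub_sUU {d m i : ℕ} (hm : 3 ≤ m) (h1 : 2 ≤ i) (h2 : i ≤ d) :
    sUU d m i ⊆ Finset.Icc 1 (d + m) ∧ (sUU d m i).card = d :=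
  sub_swp (sub_sS (by omega)) (by rw [mem_sS]; omega) (by rw [mem_sS]; omega) (by omega) (by omega)

lemma sub_sVV {d m i : ℕ} (hm : 3 ≤ m) (h2 : i + 1 < d) :
    sVV d m i ⊆ Finset.Icc 1 (d + m) ∧ (sVV d m i).card = d :=
  sub_swp (sub_sS (by omega)) (by rw [mem_sS]; omega) (by rw [mem_sS]; omega) (by omega) (by omega)

lemma nb_S_U {d m i : ℕ} (hm : 2 ≤ m) (h1 : 1 ≤ i) (h2 : i ≤ d) :
    NB (d + m) (sS d m i) (sU d m i) :=
  nb_hi (i + m) (by omega) (by rw [mem_sS]; omega) (by rw [mem_sU]; omega)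
    (fun z hz => by rw [mem_sS, mem_sU]; omega)

lemma nb_S_U2 {d m i : ℕ} (hm : 3 ≤ m) (h1 : 1 ≤ i) (h2 : i ≤ d) :
    NB (d + m) (sS d m i) (sU2 d m i) :=
  nb_hi (i + m) (by omega) (by rw [mem_sS]; omega) (by rw [mem_sU2]; omega)
    (fun z hz => by rw [mem_sS, mem_sU2]; omega)

lemma nb_U_U2 {d m i : ℕ} (hm : 3 ≤ m) (h1 : 1 ≤ i) (h2 : i ≤ d) :
    NB (d + m) (sU d m i) (sU2 d m i) :=
  nb_hi (i + m) (by omega) (by rw [mem_sU]; omega) (by rw [mem_sU2]; omega)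
    (fun z hz => by rw [mem_sU, mem_sU2]; omega)

lemma nb_S_UU {d m i : ℕ} (hm : 3 ≤ m) (h1 : 2 ≤ i) (h2 : i ≤ d) :
    NB (d + m) (sS d m i) (sUU d m i) :=
  nb_hi (i + m) (by omega) (by rw [mem_sS]; omega) (by rw [mem_sUU]; omega)
    (fun z hz => by rw [mem_sS, mem_sUU]; omega)

lemma nb_U_UU {d m i : ℕ} (hm : 3 ≤ m) (h1 : 2 ≤ i) (h2 : i ≤ d) :
    NB (d + m) (sU d m i) (sUU d m i) :=
  nb_hi (i + m) (by omega) (by rw [mem_sU]; omega) (by rw [mem_sUU]; omega)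
    (fun z hz => by rw [mem_sU, mem_sUU]; omega)

lemma nb_S_V {d m i : ℕ} (hm : 2 ≤ m) (h2 : i < d) :
    NB (d + m) (sS d m i) (sV d m i) :=
  nb_lo (i + 1) (by omega) (by rw [mem_sS]; omega) (by rw [mem_sV]; omega)
    (fun z hz => by rw [mem_sS, mem_sV]; omega)

lemma nb_S_V2 {d m i : ℕ} (hm : 3 ≤ m) (h2 : i < d) :
    NB (d + m) (sS d m i) (sV2 d m i) :=
  nb_lo (i + 1) (by omega) (by rw [mem_sS]; omega) (by rw [mem_sV2]; omega)
    (fun z hz => by rw [mem_sS, mem_sV2]; omega)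

lemma nb_V_V2 {d m i : ℕ} (hm : 3 ≤ m) (h2 : i < d) :
    NB (d + m) (sV d m i) (sV2 d m i) :=
  nb_lo (i + 1) (by omega) (by rw [mem_sV]; omega) (by rw [mem_sV2]; omega)
    (fun z hz => by rw [mem_sV, mem_sV2]; omega)

lemma nb_S_VV {d m i : ℕ} (hm : 3 ≤ m) (h2 : i + 1 < d) :
    NB (d + m) (sS d m i) (sVV d m i) :=
  nb_lo (i + 1) (by omega) (by rw [mem_sS]; omega) (by rw [mem_sVV]; omega)
    (fun z hz => by rw [mem_sS, mem_sVV]; omega)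

lemma nb_V_VV {d m i : ℕ} (hm : 3 ≤ m) (h2 : i + 1 < d) :
    NB (d + m) (sV d m i) (sVV d m i) :=
  nb_lo (i + 1) (by omega) (by rw [mem_sV]; omega) (by rw [mem_sVV]; omega)
    (fun z hz => by rw [mem_sV, mem_sVV]; omega)

lemma nb_V_U {d m i : ℕ} (hm : 3 ≤ m) (h1 : 1 ≤ i) (h2 : i < d) :
    NB (d + m) (sV d m i) (sU d m i) :=
  nb_two i (m + i) (by omega) (by rw [mem_sV]; omega) (by rw [mem_sU]; omega)
    (by rw [mem_sV]; omega) (by rw [mem_sU]; omega)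

lemma nb_SS {d m i j : ℕ} (hm : 2 ≤ m) (h : i + 2 ≤ j) (hj : j ≤ d) :
    NB (d + m) (sS d m i) (sS d m j) :=
  (nb_two (i + 1) (i + 2) (by omega) (by rw [mem_sS]; omega) (by rw [mem_sS]; omega)
    (by rw [mem_sS]; omega) (by rw [mem_sS]; omega)).symm

lemma nb_SU {d m i j : ℕ} (hm : 3 ≤ m) (h1 : 1 ≤ i) (h2 : i ≤ d) (hj : j ≤ d)
    (h : i + 2 ≤ j ∨ j + 2 ≤ i) : NB (d + m) (sS d m j) (sU d m i) := by
  rcases h with h | h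
  · exact nb_two i (i + 2) (by omega) (by rw [mem_sS]; omega) (by rw [mem_sU]; omega)
      (by rw [mem_sS]; omega) (by rw [mem_sU]; omega)
  · exact nb_two (i + m) (i + m - 1) (by omega) (by rw [mem_sS]; omega) (by rw [mem_sU]; omega)
      (by rw [mem_sS]; omega) (by rw [mem_sU]; omega)

lemma nb_SV {d m i j : ℕ} (hm : 3 ≤ m) (h2 : i < d) (hj : j ≤ d)
    (h : i + 2 ≤ j ∨ j + 2 ≤ i) : NB (d + m) (sS d m j) (sV d m i) := by
  rcases h with h | h
  · exact nb_two (i + 1) (i + 2) (by omega) (by rw [mem_sS]; omega) (by rw [mem_sV]; omega)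
      (by rw [mem_sS]; omega) (by rw [mem_sV]; omega)
  · exact nb_two (i + m - 1) (i + m + 1) (by omega) (by rw [mem_sS]; omega)
      (by rw [mem_sV]; omega) (by rw [mem_sS]; omega) (by rw [mem_sV]; omega)

lemma nb_SS' {d m i j : ℕ} (hm : 2 ≤ m) (hi : i ≤ d) (hj : j ≤ d)
    (h : i + 2 ≤ j ∨ j + 2 ≤ i) : NB (d + m) (sS d m i) (sS d m j) := by
  rcases h with h | h
  · exact nb_SS hm h hj
  · exact (nb_SS hm h hi).symm

lemma of_fam2 {d m : ℕ} (hm : 2 ≤ m) {P : Finset (Finset ℕ)} (h : isFam2 d m P) :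
    (SubFam (d + m) d P ∧ Good (d + m) P) ∧ P.card = 2 := by
  rcases h with ⟨i, j, h1, h2, rfl⟩ | ⟨i, h1, h2, rfl⟩ | ⟨i, h2, rfl⟩
  · exact good2 (sub_sS (by omega)) (sub_sS h2) (sS_ne_sS (by omega) (by omega) h2 (by omega))
      (fun P _ _ => locS P) (fun P _ _ => locS P) (nb_SS hm h1 h2)
  · exact good2 (sub_sS h2) (sub_sU hm h1 h2) (sS_ne_sU hm h1 h2 h2)
      (fun P _ _ => locS P) (fun P h _ => locU P hm h1 h2 h) (nb_S_U hm h1 h2)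
  · exact good2 (sub_sS h2.le) (sub_sV hm h2) (sS_ne_sV hm h2 h2.le)
      (fun P _ _ => locS P) (fun P h _ => locV P hm h2 h) (nb_S_V hm h2)

lemma sS_ne_sU2 {d m i j : ℕ} (hm : 3 ≤ m) (h1 : 1 ≤ i) (h2 : i ≤ d) (hj : j ≤ d) :
    sS d m j ≠ sU2 d m i := by
  rcases Nat.lt_or_ge j i with h | h
  · exact fset_ne (i + m) (by rw [mem_sS]; omega) (by rw [mem_sU2]; omega)
  · exact fset_ne (i) (by rw [mem_sS]; omega) (by rw [mem_sU2]; omega)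

lemma sS_ne_sUU {d m i j : ℕ} (hm : 3 ≤ m) (h1 : 2 ≤ i) (h2 : i ≤ d) (hj : j ≤ d) :
    sS d m j ≠ sUU d m i := by
  rcases Nat.lt_or_ge j i with h | h
  · exact fset_ne (i + m) (by rw [mem_sS]; omega) (by rw [mem_sUU]; omega)
  · exact fset_ne (i - 1) (by rw [mem_sS]; omega) (by rw [mem_sUU]; omega)

lemma sS_ne_sV2 {d m i j : ℕ} (hm : 3 ≤ m) (h2 : i < d) (hj : j ≤ d) :
    sS d m j ≠ sV2 d m i := by
  rcases Nat.lt_or_ge i j with h | h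
  · exact fset_ne (i + 1) (by rw [mem_sS]; omega) (by rw [mem_sV2]; omega)
  · exact fset_ne (m + i + 1) (by rw [mem_sS]; omega) (by rw [mem_sV2]; omega)

lemma sS_ne_sVV {d m i j : ℕ} (hm : 3 ≤ m) (h2 : i + 1 < d) (hj : j ≤ d) :
    sS d m j ≠ sVV d m i := by
  rcases Nat.lt_or_ge i j with h | h
  · exact fset_ne (i + 1) (by rw [mem_sS]; omega) (by rw [mem_sVV]; omega)
  · exact fset_ne (m + i + 2) (by rw [mem_sS]; omega) (by rw [mem_sVV]; omega)

lemma sU_ne_sU2 {d m i : ℕ} (hm : 3 ≤ m) (h1 : 1 ≤ i) (h2 : i ≤ d) : sU d m i ≠ sU2 d m i :=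
  fset_ne (i + 1) (by rw [mem_sU]; omega) (by rw [mem_sU2]; omega)

lemma sU_ne_sUU {d m i : ℕ} (hm : 3 ≤ m) (h1 : 2 ≤ i) (h2 : i ≤ d) : sU d m i ≠ sUU d m i :=
  fset_ne (i - 1) (by rw [mem_sU]; omega) (by rw [mem_sUU]; omega)

lemma sU2_ne_sUU {d m i : ℕ} (hm : 3 ≤ m) (h1 : 2 ≤ i) (h2 : i ≤ d) : sU2 d m i ≠ sUU d m i :=
  fset_ne (i - 1) (by rw [mem_sU2]; omega) (by rw [mem_sUU]; omega)

lemma sV_ne_sV2 {d m i : ℕ} (hm : 3 ≤ m) (h2 : i < d) : sV d m i ≠ sV2 d m i :=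
  fset_ne (m + i) (by rw [mem_sV]; omega) (by rw [mem_sV2]; omega)

lemma sV_ne_sVV {d m i : ℕ} (hm : 3 ≤ m) (h2 : i + 1 < d) : sV d m i ≠ sVV d m i :=
  fset_ne (m + i + 2) (by rw [mem_sV]; omega) (by rw [mem_sVV]; omega)

lemma sV2_ne_sVV {d m i : ℕ} (hm : 3 ≤ m) (h2 : i + 1 < d) : sV2 d m i ≠ sVV d m i :=
  fset_ne (m + i + 2) (by rw [mem_sV2]; omega) (by rw [mem_sVV]; omega)

lemma of_fam3 {d m : ℕ} (hm : 3 ≤ m) {P : Finset (Finset ℕ)} (h : isFam3 d m P) :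
    (SubFam (d + m) d P ∧ Good (d + m) P) ∧ P.card = 3 := by
  have hm2 : 2 ≤ m := by omega
  rcases h with ⟨i, j, k, h1, h2, h3, rfl⟩ | ⟨i, j, h1, h2, h3, h4, rfl⟩ | ⟨i, j, h2, h3, h4, rfl⟩ |
    ⟨i, h1, h2, rfl⟩ | h
  · exact good3 (sub_sS (by omega)) (sub_sS (by omega)) (sub_sS h3)
      (sS_ne_sS (by omega) (by omega) (by omega) (by omega))
      (sS_ne_sS (by omega) (by omega) (by omega) (by omega))
      (sS_ne_sS (by omega) (by omega) (by omega) (by omega))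
      (fun P _ _ _ => locS P) (fun P _ _ _ => locS P) (fun P _ _ _ => locS P)
      (nb_SS hm2 h1 (by omega)) (nb_SS hm2 (by omega) h3) (nb_SS hm2 h2 h3)
  · exact good3 (sub_sS h2) (sub_sU hm2 h1 h2) (sub_sS h3)
      (sS_ne_sU hm2 h1 h2 h2) (sS_ne_sS (by omega) h2 h3 (by omega)) (sS_ne_sU hm2 h1 h2 h3).symm
      (fun P _ _ _ => locS P) (fun P h _ _ => locU P hm2 h1 h2 h) (fun P _ _ _ => locS P)
      (nb_S_U hm2 h1 h2) (nb_SS' hm2 h2 h3 h4) (nb_SU hm h1 h2 h3 h4).symm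
  · exact good3 (sub_sS h2.le) (sub_sV hm2 h2) (sub_sS h3)
      (sS_ne_sV hm2 h2 h2.le) (sS_ne_sS (by omega) h2.le h3 (by omega)) (sS_ne_sV hm2 h2 h3).symm
      (fun P _ _ _ => locS P) (fun P h _ _ => locV P hm2 h2 h) (fun P _ _ _ => locS P)
      (nb_S_V hm2 h2) (nb_SS' hm2 h2.le h3 h4) (nb_SV hm h2 h3 h4).symm
  · exact good3 (sub_sS h2.le) (sub_sU hm2 h1 h2.le) (sub_sV hm2 h2)
      (sS_ne_sU hm2 h1 h2.le h2.le) (sS_ne_sV hm2 h2 h2.le) (sU_ne_sV hm h1 h2.le h2)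
      (fun P _ _ _ => locS P) (fun P h _ _ => locU P hm2 h1 h2.le h)
      (fun P h _ _ => locV P hm2 h2 h)
      (nb_S_U hm2 h1 h2.le) (nb_S_V hm2 h2) (nb_V_U hm h1 h2).symm
  rcases h with ⟨i, h1, h2, rfl⟩ | ⟨i, h1, h2, rfl⟩ | ⟨i, h2, rfl⟩ | ⟨i, h2, rfl⟩
  · exact good3 (sub_sS h2) (sub_sU hm2 h1 h2) (sub_sU2 hm h1 h2)
      (sS_ne_sU hm2 h1 h2 h2) (sS_ne_sU2 hm h1 h2 h2) (sU_ne_sU2 hm h1 h2)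
      (fun P _ _ _ => locS P) (fun P h _ _ => locU P hm2 h1 h2 h)
      (fun P h h' _ => locU2 P hm h1 h2 h h')
      (nb_S_U hm2 h1 h2) (nb_S_U2 hm h1 h2) (nb_U_U2 hm h1 h2)
  · have h1' : 1 ≤ i := by omega
    exact good3 (sub_sS h2) (sub_sU hm2 h1' h2) (sub_sUU hm h1 h2)
      (sS_ne_sU hm2 h1' h2 h2) (sS_ne_sUU hm h1 h2 h2) (sU_ne_sUU hm h1 h2)
      (fun P _ _ _ => locS P) (fun P h _ _ => locU P hm2 h1' h2 h)
      (fun P h h' _ => locUU P hm h1 h2 h h')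
      (nb_S_U hm2 h1' h2) (nb_S_UU hm h1 h2) (nb_U_UU hm h1 h2)
  · exact good3 (sub_sS h2.le) (sub_sV hm2 h2) (sub_sV2 hm h2)
      (sS_ne_sV hm2 h2 h2.le) (sS_ne_sV2 hm h2 h2.le) (sV_ne_sV2 hm h2)
      (fun P _ _ _ => locS P) (fun P h _ _ => locV P hm2 h2 h)
      (fun P h h' _ => locV2 P hm h2 h h')
      (nb_S_V hm2 h2) (nb_S_V2 hm h2) (nb_V_V2 hm h2)
  · have h2' : i < d := by omega
    exact good3 (sub_sS h2'.le) (sub_sV hm2 h2') (sub_sVV hm h2)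
      (sS_ne_sV hm2 h2' h2'.le) (sS_ne_sVV hm h2 h2'.le) (sV_ne_sVV hm h2)
      (fun P _ _ _ => locS P) (fun P h _ _ => locV P hm2 h2' h)
      (fun P h h' _ => locVV P hm h2 h h')
      (nb_S_V hm2 h2') (nb_S_VV hm h2) (nb_V_VV hm h2)

/-! ### Counting -/

def srcT (d m : ℕ) (P : Finset (Finset ℕ)) : Finset ℕ :=
  (Finset.range (d + 1)).filter (fun j => sS d m j ∈ P)

lemma mem_srcT (d m : ℕ) (P : Finset (Finset ℕ)) (j : ℕ) :
    j ∈ srcT d m P ↔ j ≤ d ∧ sS d m j ∈ P := by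
  rw [srcT, Finset.mem_filter, Finset.mem_range, Nat.lt_succ_iff]

lemma sS_eq_iff {d m i j : ℕ} (hm : 1 ≤ m) (hi : i ≤ d) (hj : j ≤ d) :
    sS d m i = sS d m j ↔ i = j := by
  constructor
  · intro h; by_contra hne; exact sS_ne_sS hm hi hj hne h
  · rintro rfl; rfl

lemma srcT_A {d m i j k : ℕ} (hm : 1 ≤ m) (hi : i ≤ d) (hj : j ≤ d) (hk : k ≤ d) :
    srcT d m {sS d m i, sS d m j, sS d m k} = {i, j, k} := by
  ext x
  rw [mem_srcT]
  simp only [Finset.mem_insert, Finset.mem_singleton]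
  constructor
  · rintro ⟨hx, h⟩
    rwa [sS_eq_iff hm hx hi, sS_eq_iff hm hx hj, sS_eq_iff hm hx hk] at h
  · rintro (rfl | rfl | rfl)
    · exact ⟨hi, Or.inl rfl⟩
    · exact ⟨hj, Or.inr (Or.inl rfl)⟩
    · exact ⟨hk, Or.inr (Or.inr rfl)⟩

lemma srcT_SS {d m i j : ℕ} (hm : 1 ≤ m) (hi : i ≤ d) (hj : j ≤ d) :
    srcT d m {sS d m i, sS d m j} = {i, j} := by
  ext x
  rw [mem_srcT]
  simp only [Finset.mem_insert, Finset.mem_singleton]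
  constructor
  · rintro ⟨hx, h⟩
    rwa [sS_eq_iff hm hx hi, sS_eq_iff hm hx hj] at h
  · rintro (rfl | rfl)
    · exact ⟨hi, Or.inl rfl⟩
    · exact ⟨hj, Or.inr rfl⟩

lemma srcT_B {d m i j : ℕ} {X : Finset ℕ} (hm : 1 ≤ m) (hi : i ≤ d) (hj : j ≤ d)
    (hX : ∀ k, k ≤ d → sS d m k ≠ X) :
    srcT d m {sS d m i, X, sS d m j} = {i, j} := by
  ext x
  rw [mem_srcT]
  simp only [Finset.mem_insert, Finset.mem_singleton]
  constructor
  · rintro ⟨hx, h⟩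
    rw [sS_eq_iff hm hx hi, sS_eq_iff hm hx hj] at h
    rcases h with h | h | h
    · exact Or.inl h
    · exact absurd h (hX x hx)
    · exact Or.inr h
  · rintro (rfl | rfl)
    · exact ⟨hi, Or.inl rfl⟩
    · exact ⟨hj, Or.inr (Or.inr rfl)⟩

lemma srcT_1 {d m i : ℕ} {X Y : Finset ℕ} (hm : 1 ≤ m) (hi : i ≤ d)
    (hX : ∀ k, k ≤ d → sS d m k ≠ X) (hY : ∀ k, k ≤ d → sS d m k ≠ Y) :
    srcT d m {sS d m i, X, Y} = {i} := by
  ext x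
  rw [mem_srcT]
  simp only [Finset.mem_insert, Finset.mem_singleton]
  constructor
  · rintro ⟨hx, h⟩
    rw [sS_eq_iff hm hx hi] at h
    rcases h with h | h | h
    · exact h
    · exact absurd h (hX x hx)
    · exact absurd h (hY x hx)
  · rintro rfl
    exact ⟨hi, Or.inl rfl⟩

lemma srcT_2 {d m i : ℕ} {X : Finset ℕ} (hm : 1 ≤ m) (hi : i ≤ d)
    (hX : ∀ k, k ≤ d → sS d m k ≠ X) :
    srcT d m {sS d m i, X} = {i} := by
  ext x
  rw [mem_srcT]
  simp only [Finset.mem_insert, Finset.mem_singleton]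
  constructor
  · rintro ⟨hx, h⟩
    rw [sS_eq_iff hm hx hi] at h
    rcases h with h | h
    · exact h
    · exact absurd h (hX x hx)
  · rintro rfl
    exact ⟨hi, Or.inl rfl⟩

/-- one-parameter pieces indexed by their unique source -/
lemma card_piece {d m : ℕ} (I : Finset ℕ) (f : ℕ → Finset (Finset ℕ))
    (h : ∀ i ∈ I, srcT d m (f i) = {i}) : (I.image f).card = I.card := by
  apply Finset.card_image_of_injOn
  intro a ha b hb e
  have := h a ha
  rw [show f a = f b from e, h b hb] at this
  exact (Finset.singleton_injective this).symm

lemma disj_piece {d m : ℕ} (I J : Finset ℕ) (f g : ℕ → Finset (Finset ℕ))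
    (hf : ∀ i ∈ I, srcT d m (f i) = {i}) (hg : ∀ i ∈ J, srcT d m (g i) = {i})
    (h : ∀ i ∈ I, i ∈ J → f i ≠ g i) : Disjoint (I.image f) (J.image g) := by
  rw [Finset.disjoint_left]
  intro P hP hP'
  obtain ⟨a, ha, rfl⟩ := Finset.mem_image.1 hP
  obtain ⟨b, hb, e⟩ := Finset.mem_image.1 hP'
  have := hf a ha
  rw [← e, hg b hb] at this
  have := Finset.singleton_injective this
  subst this
  exact h b ha hb e.symm

lemma fam_ne {A X Y X' Y' : Finset ℕ} (Z : Finset ℕ) (h : Z = X ∨ Z = Y)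
    (h1 : A ≠ Z) (h2 : Z ≠ X') (h3 : Z ≠ Y') :
    ({A, X, Y} : Finset (Finset ℕ)) ≠ {A, X', Y'} := by
  intro e
  have : Z ∈ ({A, X, Y} : Finset (Finset ℕ)) := by
    simp only [Finset.mem_insert, Finset.mem_singleton]; exact Or.inr h
  rw [e] at this
  simp only [Finset.mem_insert, Finset.mem_singleton] at this
  rcases this with h | h | h
  · exact h1 h.symm
  · exact h2 h
  · exact h3 h

lemma sum2 (t : ℕ) : 2 * ((∑ j ∈ Finset.range (t + 1), (j - 1) : ℕ) : ℤ) = (t : ℤ) * (t - 1) := by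
  induction t with
  | zero => simp
  | succ t ih =>
    rw [Finset.sum_range_succ]; push_cast at ih ⊢
    rw [mul_add, ih]
    have : ((t + 1 - 1 : ℕ) : ℤ) = t := by simp
    simp
    ring

lemma sum3 (e : ℕ) : 6 * ((∑ k ∈ Finset.range (e + 2), ∑ j ∈ Finset.range (k - 1), (j - 1) : ℕ) : ℤ)
    = (e : ℤ) * (e - 1) * (e - 2) := by
  induction e with
  | zero => simp [Finset.sum_range_succ]
  | succ e ih =>
    rw [Finset.sum_range_succ]
    have h := sum2 e
    have e1 : e + 1 + 1 - 1 = e + 1 := by omega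
    rw [e1, Nat.cast_add, mul_add, ih]
    push_cast at h ⊢
    linarith

def idx2 (d : ℕ) : Finset (Σ _ : ℕ, ℕ) :=
  (Finset.range (d + 1)).sigma (fun k => Finset.range (k - 1))

lemma card_idx2 (d : ℕ) : 2 * ((idx2 d).card : ℤ) = (d : ℤ) * (d - 1) := by
  rw [idx2, Finset.card_sigma, ← sum2]
  simp only [Finset.card_range]

def idx3 (d : ℕ) : Finset (Σ _ : ℕ, Σ _ : ℕ, ℕ) :=
  (Finset.range (d + 1)).sigma
    (fun k => (Finset.range (k - 1)).sigma (fun j => Finset.range (j - 1)))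

lemma card_idx3 (e : ℕ) : 6 * ((idx3 (e + 1)).card : ℤ) = (e : ℤ) * (e - 1) * (e - 2) := by
  rw [idx3, Finset.card_sigma, ← sum3]
  simp only [Finset.card_sigma, Finset.card_range]

def idxB (d : ℕ) : Finset (ℕ × ℕ) :=
  (Finset.Icc 1 d ×ˢ Finset.range (d + 1)).filter (fun x => x.1 + 2 ≤ x.2 ∨ x.2 + 2 ≤ x.1)

lemma mem_idxB (d i j : ℕ) : (i, j) ∈ idxB d ↔ 1 ≤ i ∧ i ≤ d ∧ j ≤ d ∧ (i + 2 ≤ j ∨ j + 2 ≤ i) := by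
  rw [idxB, Finset.mem_filter, Finset.mem_product, Finset.mem_Icc, Finset.mem_range]
  simp only []
  omega

def idxC (d : ℕ) : Finset (ℕ × ℕ) :=
  (Finset.range d ×ˢ Finset.range (d + 1)).filter (fun x => x.1 + 2 ≤ x.2 ∨ x.2 + 2 ≤ x.1)

lemma mem_idxC (d i j : ℕ) : (i, j) ∈ idxC d ↔ i < d ∧ j ≤ d ∧ (i + 2 ≤ j ∨ j + 2 ≤ i) := by
  rw [idxC, Finset.mem_filter, Finset.mem_product, Finset.mem_range, Finset.mem_range]
  simp only []
  omega

lemma card_idxB (e : ℕ) : (idxB (e + 1)).card = e * e := by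
  have : (Finset.range e ×ˢ Finset.range e).card = e * e := by simp
  rw [← this]
  refine Finset.card_nbij' (fun x => if x.2 + 2 ≤ x.1 then (x.1 - 2, x.2) else (x.1 - 1, x.2 - 2))
    (fun y => if y.2 ≤ y.1 then (y.1 + 2, y.2) else (y.1 + 1, y.2 + 2)) ?_ ?_ ?_ ?_
  · rintro ⟨i, j⟩ h
    rw [Finset.mem_coe, mem_idxB] at h
    dsimp only
    split_ifs with hc
    all_goals
      rw [Finset.mem_coe, Finset.mem_product, Finset.mem_range, Finset.mem_range]
      dsimp only; omega
  · rintro ⟨i, j⟩ h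
    rw [Finset.mem_coe, Finset.mem_product, Finset.mem_range, Finset.mem_range] at h
    dsimp only at h ⊢
    split_ifs with hc
    all_goals
      rw [Finset.mem_coe, mem_idxB]; omega
  · rintro ⟨i, j⟩ h
    rw [Finset.mem_coe, mem_idxB] at h
    dsimp only
    split_ifs with hc h2 h2
    all_goals
      dsimp only at *
      first
        | omega
        | (rw [Prod.mk.injEq]; omega)
  · rintro ⟨i, j⟩ h
    rw [Finset.mem_coe, Finset.mem_product, Finset.mem_range, Finset.mem_range] at h
    dsimp only at h ⊢
    split_ifs with hc h2 h2
    all_goals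
      dsimp only at *
      first
        | omega
        | (rw [Prod.mk.injEq]; omega)

lemma card_idxC (e : ℕ) : (idxC (e + 1)).card = e * e := by
  rw [← card_idxB]
  refine Finset.card_nbij' (fun x => (e + 1 - x.1, e + 1 - x.2))
    (fun x => (e + 1 - x.1, e + 1 - x.2)) ?_ ?_ ?_ ?_
  all_goals
    rintro ⟨i, j⟩ h
    rw [Finset.mem_coe] at h
    first
      | rw [mem_idxC] at h
      | rw [mem_idxB] at h
    dsimp only
    first
      | (rw [Prod.mk.injEq]; omega)
      | (rw [Finset.mem_coe, mem_idxB]; omega)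
      | (rw [Finset.mem_coe, mem_idxC]; omega)

lemma mem_idx2 (d : ℕ) (x : Σ _ : ℕ, ℕ) : x ∈ idx2 d ↔ x.2 + 2 ≤ x.1 ∧ x.1 ≤ d := by
  rw [idx2, Finset.mem_sigma, Finset.mem_range, Finset.mem_range]; omega

lemma mem_idx3 (d : ℕ) (x : Σ _ : ℕ, Σ _ : ℕ, ℕ) :
    x ∈ idx3 d ↔ x.2.2 + 2 ≤ x.2.1 ∧ x.2.1 + 2 ≤ x.1 ∧ x.1 ≤ d := by
  rw [idx3, Finset.mem_sigma, Finset.mem_sigma, Finset.mem_range, Finset.mem_range,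
    Finset.mem_range]; omega

def fP (d m : ℕ) (x : Σ _ : ℕ, ℕ) : Finset (Finset ℕ) := {sS d m x.2, sS d m x.1}
def fQ (d m : ℕ) (x : Σ _ : ℕ, Σ _ : ℕ, ℕ) : Finset (Finset ℕ) :=
  {sS d m x.2.2, sS d m x.2.1, sS d m x.1}
def fU (d m i : ℕ) : Finset (Finset ℕ) := {sS d m i, sU d m i}
def fV (d m i : ℕ) : Finset (Finset ℕ) := {sS d m i, sV d m i}
def fB (d m : ℕ) (x : ℕ × ℕ) : Finset (Finset ℕ) := {sS d m x.1, sU d m x.1, sS d m x.2}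
def fC (d m : ℕ) (x : ℕ × ℕ) : Finset (Finset ℕ) := {sS d m x.1, sV d m x.1, sS d m x.2}
def fD (d m i : ℕ) : Finset (Finset ℕ) := {sS d m i, sU d m i, sV d m i}
def fE1 (d m i : ℕ) : Finset (Finset ℕ) := {sS d m i, sU d m i, sU2 d m i}
def fE2 (d m i : ℕ) : Finset (Finset ℕ) := {sS d m i, sU d m i, sUU d m i}
def fE3 (d m i : ℕ) : Finset (Finset ℕ) := {sS d m i, sV d m i, sV2 d m i}
def fE4 (d m i : ℕ) : Finset (Finset ℕ) := {sS d m i, sV d m i, sVV d m i}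

def Fam2 (d m : ℕ) : Finset (Finset (Finset ℕ)) :=
  (idx2 d).image (fP d m) ∪
    ((Finset.Icc 1 d).image (fU d m) ∪ (Finset.range d).image (fV d m))

lemma mem_Fam2 (d m : ℕ) (P : Finset (Finset ℕ)) : P ∈ Fam2 d m ↔ isFam2 d m P := by
  rw [Fam2, Finset.mem_union, Finset.mem_union, Finset.mem_image, Finset.mem_image,
    Finset.mem_image, isFam2]
  refine or_congr ?_ (or_congr ?_ ?_)
  · constructor
    · rintro ⟨x, hx, rfl⟩
      rw [mem_idx2] at hx
      exact ⟨x.2, x.1, hx.1, hx.2, rfl⟩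
    · rintro ⟨i, j, h1, h2, rfl⟩
      exact ⟨⟨j, i⟩, (mem_idx2 _ _).2 ⟨h1, h2⟩, rfl⟩
  · constructor
    · rintro ⟨x, hx, rfl⟩
      rw [Finset.mem_Icc] at hx
      exact ⟨x, hx.1, hx.2, rfl⟩
    · rintro ⟨i, h1, h2, rfl⟩
      exact ⟨i, Finset.mem_Icc.2 ⟨h1, h2⟩, rfl⟩
  · constructor
    · rintro ⟨x, hx, rfl⟩
      exact ⟨x, Finset.mem_range.1 hx, rfl⟩
    · rintro ⟨i, h1, rfl⟩
      exact ⟨i, Finset.mem_range.2 h1, rfl⟩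

lemma card_Fam2 {d m : ℕ} (hm : 2 ≤ m) : 2 * ((Fam2 d m).card : ℤ) = (d : ℤ) ^ 2 + 3 * d := by
  have tP : ∀ x ∈ idx2 d, srcT d m (fP d m x) = {x.2, x.1} := by
    intro x hx; rw [mem_idx2] at hx
    exact srcT_SS (by omega) (by omega) (by omega)
  have tU : ∀ i ∈ Finset.Icc 1 d, srcT d m (fU d m i) = {i} := by
    intro i hi; rw [Finset.mem_Icc] at hi
    exact srcT_2 (by omega) (by omega) (fun k hk => sS_ne_sU hm hi.1 hi.2 hk)
  have tV : ∀ i ∈ Finset.range d, srcT d m (fV d m i) = {i} := by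
    intro i hi; rw [Finset.mem_range] at hi
    exact srcT_2 (by omega) (by omega) (fun k hk => sS_ne_sV hm hi hk)
  have d1 : Disjoint ((Finset.Icc 1 d).image (fU d m)) ((Finset.range d).image (fV d m)) := by
    apply disj_piece _ _ _ _ tU tV
    intro i hi hi' e
    rw [Finset.mem_Icc] at hi
    rw [Finset.mem_range] at hi'
    have : sU d m i ∈ fV d m i := by rw [← e, fU]; simp
    rw [fV, Finset.mem_insert, Finset.mem_singleton] at this
    rcases this with h | h
    · exact sS_ne_sU hm hi.1 hi.2 hi.2 h.symm
    · exact fset_ne i (A := sV d m i) (A' := sU d m i)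
        (by rw [mem_sV]; omega) (by rw [mem_sU]; omega) h.symm
  have d2 : Disjoint ((idx2 d).image (fP d m))
      ((Finset.Icc 1 d).image (fU d m) ∪ (Finset.range d).image (fV d m)) := by
    rw [Finset.disjoint_left]
    intro P hP hP'
    obtain ⟨x, hx, rfl⟩ := Finset.mem_image.1 hP
    have h2 : (srcT d m (fP d m x)).card = 2 := by
      rw [tP x hx, Finset.card_pair]
      rw [mem_idx2] at hx; omega
    rcases Finset.mem_union.1 hP' with h | h
    · obtain ⟨i, hi, e⟩ := Finset.mem_image.1 h
      rw [← e, tU i hi, Finset.card_singleton] at h2; omega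
    · obtain ⟨i, hi, e⟩ := Finset.mem_image.1 h
      rw [← e, tV i hi, Finset.card_singleton] at h2; omega
  have cP : ((idx2 d).image (fP d m)).card = (idx2 d).card := by
    apply Finset.card_image_of_injOn
    rintro ⟨a, b⟩ hx ⟨a', b'⟩ hy e
    rw [Finset.mem_coe] at hx hy
    have h := tP _ hx
    rw [show fP d m ⟨a, b⟩ = fP d m ⟨a', b'⟩ from e, tP _ hy] at h
    rw [mem_idx2] at hx hy
    have h1 := Finset.ext_iff.1 h a
    have h2 := Finset.ext_iff.1 h b
    simp only [Finset.mem_insert, Finset.mem_singleton, or_true, true_or, iff_true] at h1 h2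
    dsimp only at hx hy
    have e1 : a = a' := by omega
    have e2 : b = b' := by omega
    rw [e1, e2]
  rw [Fam2, Finset.card_union_of_disjoint d2, Finset.card_union_of_disjoint d1, cP,
    card_piece _ _ tU, card_piece _ _ tV, Nat.card_Icc, Finset.card_range]
  have := card_idx2 d
  push_cast
  linarith

/-- the families with exactly one source -/
def FamOne (d m : ℕ) : Finset (Finset (Finset ℕ)) :=
  (Finset.Ico 1 d).image (fD d m) ∪ ((Finset.Icc 1 d).image (fE1 d m) ∪
    ((Finset.Icc 2 d).image (fE2 d m) ∪ ((Finset.range d).image (fE3 d m) ∪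
      (Finset.range (d - 1)).image (fE4 d m))))

def FamTwo (d m : ℕ) : Finset (Finset (Finset ℕ)) :=
  (idxB d).image (fB d m) ∪ (idxC d).image (fC d m)

def Fam3 (d m : ℕ) : Finset (Finset (Finset ℕ)) :=
  (idx3 d).image (fQ d m) ∪ (FamTwo d m ∪ FamOne d m)

lemma mem_Fam3 (d m : ℕ) (P : Finset (Finset ℕ)) : P ∈ Fam3 d m ↔ isFam3 d m P := by
  simp only [Fam3, FamTwo, FamOne, Finset.mem_union, Finset.mem_image, isFam3, isOne, or_assoc]
  refine or_congr ?_ (or_congr ?_ (or_congr ?_ (or_congr ?_ (or_congr ?_ (or_congr ?_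
    (or_congr ?_ ?_))))))
  · constructor
    · rintro ⟨x, hx, rfl⟩
      rw [mem_idx3] at hx
      exact ⟨x.2.2, x.2.1, x.1, hx.1, hx.2.1, hx.2.2, rfl⟩
    · rintro ⟨i, j, k, h1, h2, h3, rfl⟩
      exact ⟨⟨k, j, i⟩, (mem_idx3 _ _).2 ⟨h1, h2, h3⟩, rfl⟩
  · constructor
    · rintro ⟨⟨i, j⟩, hx, rfl⟩
      rw [mem_idxB] at hx
      exact ⟨i, j, hx.1, hx.2.1, hx.2.2.1, hx.2.2.2, rfl⟩
    · rintro ⟨i, j, h1, h2, h3, h4, rfl⟩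
      exact ⟨(i, j), (mem_idxB _ _ _).2 ⟨h1, h2, h3, h4⟩, rfl⟩
  · constructor
    · rintro ⟨⟨i, j⟩, hx, rfl⟩
      rw [mem_idxC] at hx
      exact ⟨i, j, hx.1, hx.2.1, hx.2.2, rfl⟩
    · rintro ⟨i, j, h2, h3, h4, rfl⟩
      exact ⟨(i, j), (mem_idxC _ _ _).2 ⟨h2, h3, h4⟩, rfl⟩
  · constructor
    · rintro ⟨x, hx, rfl⟩
      rw [Finset.mem_Ico] at hx
      exact ⟨x, hx.1, hx.2, rfl⟩
    · rintro ⟨i, h1, h2, rfl⟩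
      exact ⟨i, Finset.mem_Ico.2 ⟨h1, h2⟩, rfl⟩
  · constructor
    · rintro ⟨x, hx, rfl⟩
      rw [Finset.mem_Icc] at hx
      exact ⟨x, hx.1, hx.2, rfl⟩
    · rintro ⟨i, h1, h2, rfl⟩
      exact ⟨i, Finset.mem_Icc.2 ⟨h1, h2⟩, rfl⟩
  · constructor
    · rintro ⟨x, hx, rfl⟩
      rw [Finset.mem_Icc] at hx
      exact ⟨x, hx.1, hx.2, rfl⟩
    · rintro ⟨i, h1, h2, rfl⟩
      exact ⟨i, Finset.mem_Icc.2 ⟨h1, h2⟩, rfl⟩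
  · constructor
    · rintro ⟨x, hx, rfl⟩
      exact ⟨x, Finset.mem_range.1 hx, rfl⟩
    · rintro ⟨i, h1, rfl⟩
      exact ⟨i, Finset.mem_range.2 h1, rfl⟩
  · constructor
    · rintro ⟨x, hx, rfl⟩
      rw [Finset.mem_range] at hx
      exact ⟨x, by omega, rfl⟩
    · rintro ⟨i, h1, rfl⟩
      exact ⟨i, Finset.mem_range.2 (by omega), rfl⟩

lemma sU_ne_sV2 {d m i : ℕ} (hm : 3 ≤ m) (h1 : 1 ≤ i) (h2 : i < d) : sU d m i ≠ sV2 d m i :=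
  (fset_ne i (by rw [mem_sV2]; omega) (by rw [mem_sU]; omega)).symm
lemma sU_ne_sVV {d m i : ℕ} (hm : 3 ≤ m) (h1 : 1 ≤ i) (h2 : i + 1 < d) :
    sU d m i ≠ sVV d m i :=
  (fset_ne i (by rw [mem_sVV]; omega) (by rw [mem_sU]; omega)).symm
lemma sV_ne_sU2 {d m i : ℕ} (hm : 3 ≤ m) (h1 : 1 ≤ i) (h2 : i < d) : sV d m i ≠ sU2 d m i :=
  (fset_ne i (by rw [mem_sV]; omega) (by rw [mem_sU2]; omega))
lemma sV_ne_sUU {d m i : ℕ} (hm : 3 ≤ m) (h1 : 2 ≤ i) (h2 : i < d) : sV d m i ≠ sUU d m i :=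
  (fset_ne (i - 1) (by rw [mem_sV]; omega) (by rw [mem_sUU]; omega))

lemma card_FamOne {d m : ℕ} (hm : 3 ≤ m) (hd : 1 ≤ d) :
    (FamOne d m).card + 3 = 5 * d ∧ ∀ P ∈ FamOne d m, (srcT d m P).card = 1 := by
  have hm2 : 2 ≤ m := by omega
  have tD : ∀ i ∈ Finset.Ico 1 d, srcT d m (fD d m i) = {i} := by
    intro i hi; rw [Finset.mem_Ico] at hi
    exact srcT_1 (by omega) (by omega) (fun k hk => sS_ne_sU hm2 hi.1 hi.2.le hk)
      (fun k hk => sS_ne_sV hm2 hi.2 hk)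
  have t1 : ∀ i ∈ Finset.Icc 1 d, srcT d m (fE1 d m i) = {i} := by
    intro i hi; rw [Finset.mem_Icc] at hi
    exact srcT_1 (by omega) (by omega) (fun k hk => sS_ne_sU hm2 hi.1 hi.2 hk)
      (fun k hk => sS_ne_sU2 hm hi.1 hi.2 hk)
  have t2 : ∀ i ∈ Finset.Icc 2 d, srcT d m (fE2 d m i) = {i} := by
    intro i hi; rw [Finset.mem_Icc] at hi
    exact srcT_1 (by omega) (by omega) (fun k hk => sS_ne_sU hm2 (by omega) hi.2 hk)
      (fun k hk => sS_ne_sUU hm hi.1 hi.2 hk)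
  have t3 : ∀ i ∈ Finset.range d, srcT d m (fE3 d m i) = {i} := by
    intro i hi; rw [Finset.mem_range] at hi
    exact srcT_1 (by omega) (by omega) (fun k hk => sS_ne_sV hm2 hi hk)
      (fun k hk => sS_ne_sV2 hm hi hk)
  have t4 : ∀ i ∈ Finset.range (d - 1), srcT d m (fE4 d m i) = {i} := by
    intro i hi; rw [Finset.mem_range] at hi
    exact srcT_1 (by omega) (by omega) (fun k hk => sS_ne_sV hm2 (by omega) hk)
      (fun k hk => sS_ne_sVV hm (by omega) hk)
  have dD1 := disj_piece _ _ _ _ tD t1 (by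
    intro i hi hi'; rw [Finset.mem_Ico] at hi
    exact fam_ne (sV d m i) (Or.inr rfl) (sS_ne_sV hm2 hi.2 hi.2.le)
      (sU_ne_sV hm hi.1 hi.2.le hi.2).symm (sV_ne_sU2 hm hi.1 hi.2))
  have dD2 := disj_piece _ _ _ _ tD t2 (by
    intro i hi hi'; rw [Finset.mem_Ico] at hi; rw [Finset.mem_Icc] at hi'
    exact fam_ne (sV d m i) (Or.inr rfl) (sS_ne_sV hm2 hi.2 hi.2.le)
      (sU_ne_sV hm hi.1 hi.2.le hi.2).symm (sV_ne_sUU hm hi'.1 hi.2))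
  have dD3 := disj_piece _ _ _ _ tD t3 (by
    intro i hi hi'; rw [Finset.mem_Ico] at hi
    exact fam_ne (sU d m i) (Or.inl rfl) (sS_ne_sU hm2 hi.1 hi.2.le hi.2.le)
      (sU_ne_sV hm hi.1 hi.2.le hi.2) (sU_ne_sV2 hm hi.1 hi.2))
  have dD4 := disj_piece _ _ _ _ tD t4 (by
    intro i hi hi'; rw [Finset.mem_Ico] at hi; rw [Finset.mem_range] at hi'
    exact fam_ne (sU d m i) (Or.inl rfl) (sS_ne_sU hm2 hi.1 hi.2.le hi.2.le)
      (sU_ne_sV hm hi.1 hi.2.le hi.2) (sU_ne_sVV hm hi.1 (by omega)))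
  have d12 := disj_piece _ _ _ _ t1 t2 (by
    intro i hi hi'; rw [Finset.mem_Icc] at hi hi'
    exact fam_ne (sU2 d m i) (Or.inr rfl) (sS_ne_sU2 hm hi.1 hi.2 hi.2)
      (sU_ne_sU2 hm hi.1 hi.2).symm (sU2_ne_sUU hm hi'.1 hi.2))
  have d13 := disj_piece _ _ _ _ t1 t3 (by
    intro i hi hi'; rw [Finset.mem_Icc] at hi; rw [Finset.mem_range] at hi'
    exact fam_ne (sU d m i) (Or.inl rfl) (sS_ne_sU hm2 hi.1 hi.2 hi.2)
      (sU_ne_sV hm hi.1 hi.2 hi') (sU_ne_sV2 hm hi.1 hi'))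
  have d14 := disj_piece _ _ _ _ t1 t4 (by
    intro i hi hi'; rw [Finset.mem_Icc] at hi; rw [Finset.mem_range] at hi'
    exact fam_ne (sU d m i) (Or.inl rfl) (sS_ne_sU hm2 hi.1 hi.2 hi.2)
      (sU_ne_sV hm hi.1 hi.2 (by omega)) (sU_ne_sVV hm hi.1 (by omega)))
  have d23 := disj_piece _ _ _ _ t2 t3 (by
    intro i hi hi'; rw [Finset.mem_Icc] at hi; rw [Finset.mem_range] at hi'
    have h1 : 1 ≤ i := by omega
    exact fam_ne (sU d m i) (Or.inl rfl) (sS_ne_sU hm2 h1 hi.2 hi.2)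
      (sU_ne_sV hm h1 hi.2 hi') (sU_ne_sV2 hm h1 hi'))
  have d24 := disj_piece _ _ _ _ t2 t4 (by
    intro i hi hi'; rw [Finset.mem_Icc] at hi; rw [Finset.mem_range] at hi'
    have h1 : 1 ≤ i := by omega
    exact fam_ne (sU d m i) (Or.inl rfl) (sS_ne_sU hm2 h1 hi.2 hi.2)
      (sU_ne_sV hm h1 hi.2 (by omega)) (sU_ne_sVV hm h1 (by omega)))
  have d34 := disj_piece _ _ _ _ t3 t4 (by
    intro i hi hi'; rw [Finset.mem_range] at hi hi'
    exact fam_ne (sV2 d m i) (Or.inr rfl) (sS_ne_sV2 hm hi hi.le)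
      (sV_ne_sV2 hm hi).symm (sV2_ne_sVV hm (by omega)))
  constructor
  · rw [FamOne, Finset.card_union_of_disjoint, Finset.card_union_of_disjoint,
      Finset.card_union_of_disjoint, Finset.card_union_of_disjoint d34,
      card_piece _ _ tD, card_piece _ _ t1, card_piece _ _ t2, card_piece _ _ t3,
      card_piece _ _ t4, Nat.card_Icc, Nat.card_Icc, Nat.card_Ico, Finset.card_range,
      Finset.card_range]
    · omega
    · rw [Finset.disjoint_union_right]; exact ⟨d23, d24⟩
    · rw [Finset.disjoint_union_right, Finset.disjoint_union_right]; exact ⟨d12, d13, d14⟩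
    · rw [Finset.disjoint_union_right, Finset.disjoint_union_right, Finset.disjoint_union_right]
      exact ⟨dD1, dD2, dD3, dD4⟩
  · intro P hP
    simp only [FamOne, Finset.mem_union, Finset.mem_image] at hP
    rcases hP with ⟨i, hi, rfl⟩ | ⟨i, hi, rfl⟩ | ⟨i, hi, rfl⟩ | ⟨i, hi, rfl⟩ | ⟨i, hi, rfl⟩
    · rw [tD i hi, Finset.card_singleton]
    · rw [t1 i hi, Finset.card_singleton]
    · rw [t2 i hi, Finset.card_singleton]
    · rw [t3 i hi, Finset.card_singleton]
    · rw [t4 i hi, Finset.card_singleton]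

lemma card_FamTwo {e m : ℕ} (hm : 3 ≤ m) :
    (FamTwo (e + 1) m).card = 2 * (e * e) ∧
      ∀ P ∈ FamTwo (e + 1) m, (srcT (e + 1) m P).card = 2 := by
  have hm2 : 2 ≤ m := by omega
  generalize hd : e + 1 = d
  have tB : ∀ i j, (i, j) ∈ idxB d → srcT d m (fB d m (i, j)) = {i, j} := by
    intro i j h; rw [mem_idxB] at h
    exact srcT_B (by omega) h.2.1 h.2.2.1 (fun k hk => sS_ne_sU hm2 h.1 h.2.1 hk)
  have tC : ∀ i j, (i, j) ∈ idxC d → srcT d m (fC d m (i, j)) = {i, j} := by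
    intro i j h; rw [mem_idxC] at h
    exact srcT_B (by omega) h.1.le h.2.1 (fun k hk => sS_ne_sV hm2 h.1 hk)
  have key : ∀ i j j' : ℕ, i ≠ j → ({i, j} : Finset ℕ) = {i, j'} → j = j' := by
    intro i j j' hne h
    have := Finset.ext_iff.1 h j
    simp only [Finset.mem_insert, Finset.mem_singleton, or_true, true_iff] at this
    omega
  have cB : ((idxB d).image (fB d m)).card = (idxB d).card := by
    apply Finset.card_image_of_injOn
    rintro ⟨i, j⟩ hx ⟨i', j'⟩ hy e
    rw [Finset.mem_coe] at hx hy
    have h := tB _ _ hx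
    rw [show fB d m (i, j) = fB d m (i', j') from e, tB _ _ hy] at h
    have hU : sU d m i ∈ fB d m (i', j') := by
      rw [← show fB d m (i, j) = fB d m (i', j') from e, fB]; simp
    rw [mem_idxB] at hx hy
    rw [fB, Finset.mem_insert, Finset.mem_insert, Finset.mem_singleton] at hU
    have e1 : i = i' := by
      rcases hU with h | h | h
      · exact absurd h.symm (sS_ne_sU hm2 hx.1 hx.2.1 hy.2.1)
      · exact sU_inj hm2 hx.1 hx.2.1 hy.1 hy.2.1 h
      · exact absurd h.symm (sS_ne_sU hm2 hx.1 hx.2.1 hy.2.2.1)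
    subst e1
    rw [key i j j' (by omega) h.symm]
  have cC : ((idxC d).image (fC d m)).card = (idxC d).card := by
    apply Finset.card_image_of_injOn
    rintro ⟨i, j⟩ hx ⟨i', j'⟩ hy e
    rw [Finset.mem_coe] at hx hy
    have h := tC _ _ hx
    rw [show fC d m (i, j) = fC d m (i', j') from e, tC _ _ hy] at h
    have hU : sV d m i ∈ fC d m (i', j') := by
      rw [← show fC d m (i, j) = fC d m (i', j') from e, fC]; simp
    rw [mem_idxC] at hx hy
    rw [fC, Finset.mem_insert, Finset.mem_insert, Finset.mem_singleton] at hU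
    have e1 : i = i' := by
      rcases hU with h | h | h
      · exact absurd h.symm (sS_ne_sV hm2 hx.1 hy.1.le)
      · exact sV_inj hm2 hx.1 hy.1 h
      · exact absurd h.symm (sS_ne_sV hm2 hx.1 hy.2.1)
    subst e1
    rw [key i j j' (by omega) h.symm]
  have dj : Disjoint ((idxB d).image (fB d m)) ((idxC d).image (fC d m)) := by
    rw [Finset.disjoint_left]
    intro P hP hP'
    obtain ⟨⟨i, j⟩, hx, rfl⟩ := Finset.mem_image.1 hP
    obtain ⟨⟨i', j'⟩, hy, e⟩ := Finset.mem_image.1 hP'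
    have hU : sU d m i ∈ fC d m (i', j') := by rw [e, fB]; simp
    rw [mem_idxB] at hx
    rw [mem_idxC] at hy
    rw [fC, Finset.mem_insert, Finset.mem_insert, Finset.mem_singleton] at hU
    rcases hU with h | h | h
    · exact absurd h.symm (sS_ne_sU hm2 hx.1 hx.2.1 hy.1.le)
    · exact sU_ne_sV hm hx.1 hx.2.1 hy.1 h
    · exact absurd h.symm (sS_ne_sU hm2 hx.1 hx.2.1 hy.2.1)
  constructor
  · rw [FamTwo, Finset.card_union_of_disjoint dj, cB, cC, ← hd, card_idxB, card_idxC]; omega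
  · intro P hP
    simp only [FamTwo, Finset.mem_union, Finset.mem_image] at hP
    rcases hP with ⟨⟨i, j⟩, hx, rfl⟩ | ⟨⟨i, j⟩, hx, rfl⟩
    · rw [tB i j hx, Finset.card_pair]; rw [mem_idxB] at hx; omega
    · rw [tC i j hx, Finset.card_pair]; rw [mem_idxC] at hx; omega

lemma card_FamA {d m : ℕ} (hm : 3 ≤ m) :
    ((idx3 d).image (fQ d m)).card = (idx3 d).card ∧
      ∀ P ∈ (idx3 d).image (fQ d m), (srcT d m P).card = 3 := by
  have tQ : ∀ x ∈ idx3 d, srcT d m (fQ d m x) = {x.2.2, x.2.1, x.1} := by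
    intro x hx; rw [mem_idx3] at hx
    exact srcT_A (by omega) (by omega) (by omega) (by omega)
  constructor
  · apply Finset.card_image_of_injOn
    rintro ⟨a, b, c⟩ hx ⟨a', b', c'⟩ hy e
    rw [Finset.mem_coe] at hx hy
    have h := tQ _ hx
    rw [show fQ d m ⟨a, b, c⟩ = fQ d m ⟨a', b', c'⟩ from e, tQ _ hy] at h
    rw [mem_idx3] at hx hy
    have h1 := Finset.ext_iff.1 h a
    have h2 := Finset.ext_iff.1 h b
    have h3 := Finset.ext_iff.1 h c
    simp only [Finset.mem_insert, Finset.mem_singleton, or_true, true_or, iff_true] at h1 h2 h3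
    dsimp only at hx hy
    have e1 : a = a' := by omega
    have e2 : b = b' := by omega
    have e3 : c = c' := by omega
    rw [e1, e2, e3]
  · intro P hP
    obtain ⟨x, hx, rfl⟩ := Finset.mem_image.1 hP
    rw [tQ x hx]
    rw [mem_idx3] at hx
    exact Finset.card_eq_three.2 ⟨_, _, _, by omega, by omega, by omega, rfl⟩

lemma card_Fam3 {e m : ℕ} (hm : 3 ≤ m) : 6 * ((Fam3 (e + 1) m).card : ℤ) =
    ((e + 1 : ℕ) : ℤ) ^ 3 + 6 * ((e + 1 : ℕ) : ℤ) ^ 2 + 17 * ((e + 1 : ℕ) : ℤ) - 12 := by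
  obtain ⟨a1, a2⟩ := card_FamA (d := e + 1) hm
  obtain ⟨b1, b2⟩ := card_FamTwo (e := e) hm
  obtain ⟨c1, c2⟩ := card_FamOne (d := e + 1) hm (by omega)
  have h3 := card_idx3 e
  rw [Fam3, Finset.card_union_of_disjoint, Finset.card_union_of_disjoint, a1, b1]
  · have c3 : ((FamOne (e + 1) m).card : ℤ) = 5 * e + 2 := by omega
    push_cast
    rw [c3]
    linear_combination h3
  · rw [Finset.disjoint_left]
    intro P h h'
    have := b2 P h
    have := c2 P h'
    omega
  · rw [Finset.disjoint_left]
    intro P h h'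
    have := a2 P h
    rcases Finset.mem_union.1 h' with h' | h'
    · have := b2 P h'
      omega
    · have := c2 P h'
      omega

/-- **Lemma.** `P_{d,2} = d²/2 + 3d/2` and `P_{d,3} = d³/6 + d² + 17d/6 - 2`
(stated denominator-free over `ℤ`). -/
theorem statement17 :
    (∀ d n : ℕ, 1 ≤ d → d + 2 ≤ n →
      2 * ((coSigSet n d 2).ncard : ℤ) = (d : ℤ) ^ 2 + 3 * d) ∧
    (∀ d n : ℕ, 1 ≤ d → d + 3 ≤ n →
      6 * ((coSigSet n d 3).ncard : ℤ) = (d : ℤ) ^ 3 + 6 * d ^ 2 + 17 * d - 12) := by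
  constructor
  · intro d n _ hn
    obtain ⟨m, rfl⟩ : ∃ m, n = d + m := ⟨n - d, by omega⟩
    have hm : 2 ≤ m := by omega
    rw [coSig_ncard (d + m) d 2 (by omega) (Fam2 d m) (fun P => by
      rw [mem_Fam2]
      exact ⟨fun h => of_fam2 hm h, fun h => fam2_of hm h.1.1 h.1.2 h.2⟩)]
    exact card_Fam2 hm
  · intro d n hd hn
    obtain ⟨e, rfl⟩ : ∃ e, d = e + 1 := ⟨d - 1, by omega⟩
    obtain ⟨m, rfl⟩ : ∃ m, n = e + 1 + m := ⟨n - (e + 1), by omega⟩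
    have hm : 3 ≤ m := by omega
    rw [coSig_ncard (e + 1 + m) (e + 1) 3 (by omega) (Fam3 (e + 1) m) (fun P => by
      rw [mem_Fam3]
      exact ⟨fun h => of_fam3 hm h, fun h => fam3_of hm h.1.1 h.1.2 h.2⟩)]
    exact card_Fam3 hm
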